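/- With p, q ∈ ℚ[X] as in the context (the first Belyi map of degree 100 for Aut(HS)), the polynomial F = p − t·q ∈ K[X] has degree 100, is irreducible over K = ℚ(t), and its Galois group Polynomial.Gal F (the Galois group of the splitting field of F over K) has cardinality 88704000, the order of Aut(HS). -/

import Mathlib

open Polynomial

noncomputable section

def p : Polynomial ℚ :=
    (7 * X ^ 5 - 30 * X ^ 4 + 30 * X ^ 3 + 40 * X ^ 2 - 95 * X + 50) ^ 4 * (2 * X ^ 10 - 20 *
    X ^ 9 + 90 * X ^ 8 - 240 * X ^ 7 + 435 * X ^ 6 - 550 * X ^ 5 + 425 * X ^ 4 - 100 * X ^ 3 -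
    175 * X ^ 2 + 250 * X - 125) ^ 4 * (2 * X ^ 10 + 5 * X ^ 8 - 40 * X ^ 6 + 50 * X ^ 4 - 50
    * X ^ 2 + 125) ^ 4

def q : Polynomial ℚ :=
    2 ^ 8 * (X ^ 4 - 5) ^ 5 * (X ^ 8 - 20 * X ^ 6 + 60 * X ^ 5 - 70 * X ^ 4 + 100 * X ^ 2 -
    100 * X + 25) ^ 10

/-- `F = p − t·q ∈ K[X]` where `K = ℚ(t)` and `t = RatFunc.X`. -/
def F : Polynomial (RatFunc ℚ) :=
  p.map (algebraMap ℚ (RatFunc ℚ)) - Polynomial.C RatFunc.X * q.map (algebraMap ℚ (RatFunc ℚ))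

end

/-!
The map `p / q` has degree `100`. As `F = p - t q` is linear in `t` and `p`, `q` are coprime, `F` is
irreducible by Gauss's lemma, so `G = Gal F` is transitive on its `100` roots.

The numerator `p(Y) q(X) - p(X) q(Y)` of `p(Y) / q(Y) - p(X) / q(X)` has a symmetric factor over `ℤ`
of degree `22` in each variable. Its zeros define a `G`-invariant graph of valency `22` on the
roots, which turns out to be the Higman-Sims graph. The stabiliser `H` of a root `x` is the Galois
group over `ℚ(x)`, and reducing modulo a prime after specializing `x` to an integer yields Frobenius
elements of `H` with cycle types `1 11⁹` and `1² 7¹⁴` on the roots and `1² 5⁴`, `1² 4 8²` and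
`1² 2 3² 6²` on the neighbours of `x`. These make `H` transitive on the `77` vertices not adjacent
to `x` and `3`-transitive on the `22` neighbours. Counting then shows that the sets of common
neighbours of `x` and each of the `77` are the blocks of a Steiner system `S(3, 6, 22)`. The
stabiliser of a block induces `S₆` on it with kernel of order `16`, whence
`|G| = 100 · 77 · 16 · 720`.
-/

namespace BelyiHS

section CoefficientLists

variable {R : Type*}

/-- The polynomial with the given list of coefficients, constant term first. -/
noncomputable def ofCoeffs [Semiring R] : List R → R[X]
  | [] => 0
  | c :: a => C c + X * ofCoeffs a

/-- Addition of polynomials given by coefficient lists. -/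
def listAdd [Add R] : List R → List R → List R
  | [], b => b
  | a, [] => a
  | x :: a, y :: b => (x + y) :: listAdd a b

/-- Multiplication of a polynomial given by a coefficient list with a scalar. -/
def listSmul [Mul R] (c : R) (a : List R) : List R := a.map (c * ·)

/-- Multiplication of polynomials given by coefficient lists. -/
def listMul [Add R] [Mul R] [Zero R] : List R → List R → List R
  | [], _ => []
  | x :: a, b => listAdd (listSmul x b) (0 :: listMul a b)

/-- Powers of a polynomial given by a coefficient list. -/
def listPow [Add R] [Mul R] [Zero R] [One R] (a : List R) : ℕ → List R
  | 0 => [1]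
  | n + 1 => listMul a (listPow a n)

section Semiring

variable [Semiring R]

@[simp] lemma ofCoeffs_nil : ofCoeffs ([] : List R) = 0 := rfl

@[simp] lemma ofCoeffs_cons (c : R) (a : List R) : ofCoeffs (c :: a) = C c + X * ofCoeffs a := rfl

@[simp] lemma ofCoeffs_listAdd (a b : List R) :
    ofCoeffs (listAdd a b) = ofCoeffs a + ofCoeffs b := by
  induction a, b using listAdd.induct with
  | case1 b => simp [listAdd]
  | case2 a ha => cases a <;> simp [listAdd]
  | case3 x a y b ih =>
    simp only [listAdd, ofCoeffs_cons, ih, C_add, mul_add]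
    abel

@[simp] lemma ofCoeffs_listSmul (c : R) (a : List R) :
    ofCoeffs (listSmul c a) = C c * ofCoeffs a := by
  induction a with
  | nil => simp [listSmul]
  | cons x a ih =>
    rw [listSmul] at ih
    simp only [listSmul, List.map_cons, ofCoeffs_cons, ih, C_mul, mul_add, X_mul_C, ← mul_assoc]

@[simp] lemma ofCoeffs_listMul (a b : List R) :
    ofCoeffs (listMul a b) = ofCoeffs a * ofCoeffs b := by
  induction a with
  | nil => simp [listMul]
  | cons x a ih => simp [listMul, ih, add_mul, mul_assoc]

@[simp] lemma ofCoeffs_listPow (a : List R) (n : ℕ) : ofCoeffs (listPow a n) = ofCoeffs a ^ n := by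
  induction n with
  | zero => simp [listPow]
  | succ n ih => simp [listPow, ih, pow_succ']

lemma map_ofCoeffs {S : Type*} [Semiring S] (φ : R →+* S) (a : List R) :
    (ofCoeffs a).map φ = ofCoeffs (a.map φ) := by
  induction a with
  | nil => simp
  | cons x a ih => simp [ih]

lemma coeff_ofCoeffs (a : List R) (n : ℕ) : (ofCoeffs a).coeff n = a.getD n 0 := by
  induction a generalizing n with
  | nil => simp
  | cons x a ih => cases n <;> simp [ih]

lemma degree_ofCoeffs_lt (a : List R) : (ofCoeffs a).degree < a.length :=
  (degree_lt_iff_coeff_zero _ _).2 fun m hm => by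
    rw [coeff_ofCoeffs, List.getD_eq_default _ _ (by exact_mod_cast hm)]

lemma natDegree_ofCoeffs_le_of_length_le {a : List R} {n : ℕ} (ha : a.length ≤ n + 1) :
    (ofCoeffs a).natDegree ≤ n :=
  natDegree_le_iff_coeff_eq_zero.2 fun m hm => by
    rw [coeff_ofCoeffs, List.getD_eq_default _ _ (by omega)]

lemma ofCoeffs_append_singleton (a : List R) (c : R) :
    ofCoeffs (a ++ [c]) = ofCoeffs a + C c * X ^ a.length := by
  induction a with
  | nil => simp
  | cons x a ih =>
    simp only [List.cons_append, ofCoeffs_cons, ih, mul_add, List.length_cons, pow_succ',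
      ← mul_assoc, X_mul_C, add_assoc]

end Semiring

end CoefficientLists

section ResidueArithmetic

variable {R : Type*}

/-- The monic polynomial `X ^ n - r`, where `r` is given by a list of `n` coefficients. -/
noncomputable def monicOfCoeffs [Ring R] (r : List R) : R[X] := X ^ r.length - ofCoeffs r

/-- Multiplication by `X` modulo `monicOfCoeffs r`. The result is reduced when `a` has at most
`r.length` entries. -/
def residueMulX [Add R] [Mul R] [Zero R] (r a : List R) : List R :=
  if a.length = r.length then listAdd (0 :: a.dropLast) (listSmul (a.getLastD 0) r) else 0 :: a

/-- Multiplication modulo `monicOfCoeffs r`. -/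
def residueMul [Add R] [Mul R] [Zero R] (r : List R) : List R → List R → List R
  | [], _ => []
  | x :: a, b => listAdd (listSmul x b) (residueMulX r (residueMul r a b))

/-- Powers modulo `monicOfCoeffs r`. -/
def residuePow [Add R] [Mul R] [Zero R] [One R] (r a : List R) : ℕ → List R
  | 0 => [1]
  | n + 1 => residueMul r a (residuePow r a n)

/-- The residue `a(y) * b` modulo `monicOfCoeffs r` of a polynomial `a` evaluated at `y`. -/
def residueEval [Add R] [Mul R] [Zero R] (r y b : List R) : List R → List R
  | [] => []
  | c :: a => listAdd (listSmul c b) (residueEval r y (residueMul r y b) a)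

/-- The residue of `X ^ l ^ d` modulo `monicOfCoeffs r` over a field with `l` elements, computed by
iterating `a(X) ^ l = a(X ^ l)`. -/
def residueFrobenius [Add R] [Mul R] [Zero R] [One R] (l : ℕ) (r : List R) : ℕ → List R
  | 0 => residueMulX r [1]
  | d + 1 => residueEval r (residuePow r (residueMulX r [1]) l) [1] (residueFrobenius l r d)

section CommRing

variable [CommRing R] {S : Type*} [CommRing S] [Algebra R S] {r : List R} {x : S}

lemma monic_monicOfCoeffs (r : List R) : (monicOfCoeffs r).Monic :=
  monic_X_pow_sub (degree_ofCoeffs_lt r)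

lemma natDegree_monicOfCoeffs [Nontrivial R] (r : List R) :
    (monicOfCoeffs r).natDegree = r.length := by
  have hlt : (ofCoeffs r).degree < (X ^ r.length : R[X]).degree := by
    rw [degree_X_pow]
    exact degree_ofCoeffs_lt r
  rw [monicOfCoeffs, natDegree_eq_of_degree_eq (degree_sub_eq_left_of_degree_lt hlt),
    natDegree_X_pow]

lemma monicOfCoeffs_eq_ofCoeffs (r : List R) :
    monicOfCoeffs r = ofCoeffs (listSmul (-1) r ++ [1]) := by
  rw [ofCoeffs_append_singleton, ofCoeffs_listSmul, monicOfCoeffs, listSmul, List.length_map]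
  simp only [map_neg, map_one]
  ring

lemma monicOfCoeffs_injective [Nontrivial R] : Function.Injective (monicOfCoeffs (R := R)) := by
  intro r r' h
  have hlen : r.length = r'.length := by
    rw [← natDegree_monicOfCoeffs r, h, natDegree_monicOfCoeffs]
  rw [monicOfCoeffs, monicOfCoeffs, hlen, sub_right_inj] at h
  refine List.ext_getElem hlen fun n hn hn' => ?_
  rw [← List.getD_eq_getElem _ 0 hn, ← List.getD_eq_getElem _ 0 hn', ← coeff_ofCoeffs, h,
    coeff_ofCoeffs]

lemma aeval_residueMulX (hx : aeval x (monicOfCoeffs r) = 0) (a : List R) :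
    aeval x (ofCoeffs (residueMulX r a)) = x * aeval x (ofCoeffs a) := by
  rw [monicOfCoeffs, map_sub, map_pow, aeval_X, sub_eq_zero] at hx
  unfold residueMulX
  split_ifs with hlen
  · rcases List.eq_nil_or_concat a with rfl | ⟨a, c, rfl⟩
    · simp
    · rw [List.concat_eq_append] at hlen ⊢
      rw [List.length_append, List.length_singleton] at hlen
      have hdrop : (a ++ [c]).dropLast = a := List.dropLast_concat
      have hlast : (a ++ [c]).getLastD 0 = c := List.getLastD_concat
      simp only [hdrop, hlast, ofCoeffs_listAdd, ofCoeffs_cons, ofCoeffs_listSmul, map_zero,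
        zero_add, map_add, map_mul, map_pow, aeval_X, aeval_C, ← hx, ← hlen, pow_succ,
        ofCoeffs_append_singleton]
      ring
  · simp

lemma aeval_residueMul (hx : aeval x (monicOfCoeffs r) = 0) (a b : List R) :
    aeval x (ofCoeffs (residueMul r a b)) = aeval x (ofCoeffs a) * aeval x (ofCoeffs b) := by
  induction a with
  | nil => simp [residueMul]
  | cons c a ih => simp [residueMul, aeval_residueMulX hx, ih, add_mul, mul_assoc]

lemma aeval_residuePow (hx : aeval x (monicOfCoeffs r) = 0) (a : List R) (n : ℕ) :
    aeval x (ofCoeffs (residuePow r a n)) = aeval x (ofCoeffs a) ^ n := by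
  induction n with
  | zero => simp [residuePow]
  | succ n ih => simp [residuePow, aeval_residueMul hx, ih, pow_succ']

lemma aeval_residueEval (hx : aeval x (monicOfCoeffs r) = 0) (y b a : List R) :
    aeval x (ofCoeffs (residueEval r y b a)) =
      aeval (aeval x (ofCoeffs y)) (ofCoeffs a) * aeval x (ofCoeffs b) := by
  induction a generalizing b with
  | nil => simp [residueEval]
  | cons c a ih =>
    simp only [residueEval, ofCoeffs_listAdd, ofCoeffs_listSmul, map_add, map_mul, aeval_C, ih,
      aeval_residueMul hx, ofCoeffs_cons, aeval_X]
    ring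

end CommRing

variable {k : Type*} [Field k] [Finite k] {l : ℕ} {r : List k}

lemma aeval_residueFrobenius {S : Type*} [CommRing S] [Algebra k S] {x : S}
    (hl : Nat.card k = l) (hx : aeval x (monicOfCoeffs r) = 0) (d : ℕ) :
    aeval x (ofCoeffs (residueFrobenius l r d)) = x ^ l ^ d := by
  have := Fintype.ofFinite k
  induction d with
  | zero => simp [residueFrobenius, aeval_residueMulX hx]
  | succ d ih =>
    have hexpand (a : k[X]) : aeval (x ^ l) a = aeval x a ^ l := by
      rw [← map_pow, ← hl, Nat.card_eq_fintype_card, ← FiniteField.expand_card, expand_aeval]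
    simp [residueFrobenius, aeval_residueEval hx, aeval_residuePow hx, aeval_residueMulX hx,
      hexpand, ih, pow_succ, pow_mul]

theorem irreducible_of_dvd_X_pow_card_pow_sub_X {g : k[X]} (hg : 0 < g.natDegree)
    (hdvd : g ∣ X ^ Nat.card k ^ g.natDegree - X)
    (hcop : ∀ m ∈ g.natDegree.properDivisors,
      ∃ d, m ∣ d ∧ IsCoprime g (X ^ Nat.card k ^ d - X)) :
    Irreducible g := by
  obtain ⟨h, hirr, hhg⟩ := exists_irreducible_of_natDegree_pos hg
  have hdeg : h.natDegree ∣ g.natDegree :=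
    hirr.natDegree_dvd_of_dvd_X_pow_card_pow_sub_X (hhg.trans hdvd)
  rcases (natDegree_le_of_dvd hhg (ne_zero_of_natDegree_gt hg)).lt_or_eq with hlt | heq
  · obtain ⟨d, hd, hgd⟩ := hcop _ (Nat.mem_properDivisors.2 ⟨hdeg, hlt⟩)
    exact absurd (hgd.isUnit_of_dvd' hhg (hirr.natDegree_dvd_iff_dvd_X_pow_card_pow_sub_X.1 hd))
      hirr.not_isUnit
  · exact (associated_of_dvd_of_natDegree_le hhg (ne_zero_of_natDegree_gt hg)
      heq.ge).irreducible hirr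

/-- Equality of coefficient lists up to trailing zeros. -/
def SameCoeffs [Add R] [Mul R] [Neg R] [One R] [Zero R] (a b : List R) : Prop :=
  ∀ c ∈ listAdd a (listSmul (-1) b), c = 0

instance [DecidableEq R] [Add R] [Mul R] [Neg R] [One R] [Zero R] (a b : List R) :
    Decidable (SameCoeffs a b) := inferInstanceAs (Decidable (∀ c ∈ _, c = 0))

lemma SameCoeffs.ofCoeffs_eq [CommRing R] {a b : List R} (h : SameCoeffs a b) :
    ofCoeffs a = ofCoeffs b := by
  have hzero : ∀ a : List R, (∀ c ∈ a, c = 0) → ofCoeffs a = 0 := fun a ha => by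
    induction a with
    | nil => rfl
    | cons c a ih =>
      rw [List.forall_mem_cons] at ha
      rw [ofCoeffs_cons, ha.1, ih ha.2, C_0, mul_zero, add_zero]
  have := hzero _ h
  rwa [ofCoeffs_listAdd, ofCoeffs_listSmul, C_neg, C_1, neg_one_mul, add_neg_eq_zero] at this

/-- Rabin's irreducibility criterion for `g = monicOfCoeffs r` over a field with `l` elements:
`g` divides `X ^ l ^ n - X` for `n = deg g`, and for each proper divisor `m` of `n` there is a pair
`(d, u)` in `us` with `m ∣ d` where `u` is an inverse of `X ^ l ^ d - X` modulo `g`. -/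
def IsRabinCertificate [Add R] [Mul R] [Neg R] [One R] [Zero R] (l : ℕ) (r : List R)
    (us : List (ℕ × List R)) : Prop :=
  r ≠ [] ∧ SameCoeffs (residueFrobenius l r r.length) (residueMulX r [1]) ∧
    (∀ m ∈ r.length.properDivisors, ∃ u ∈ us, m ∣ u.1) ∧
    ∀ u ∈ us, SameCoeffs [1] <| residueMul r u.2 <|
      listAdd (residueFrobenius l r u.1) (listSmul (-1) (residueMulX r [1]))

instance [DecidableEq R] [Add R] [Mul R] [Neg R] [One R] [Zero R] (l : ℕ) (r : List R)
    (us : List (ℕ × List R)) : Decidable (IsRabinCertificate l r us) :=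
  inferInstanceAs (Decidable (_ ∧ _ ∧ _ ∧ _))

lemma IsRabinCertificate.irreducible (hl : Nat.card k = l)
    {us : List (ℕ × List k)} (h : IsRabinCertificate l r us) : Irreducible (monicOfCoeffs r) := by
  obtain ⟨hr, hfrob, hcover, hinv⟩ := h
  set g := monicOfCoeffs r
  set x := AdjoinRoot.root g
  have hmk (a : k[X]) : AdjoinRoot.mk g a = aeval x a := (AdjoinRoot.aeval_eq a).symm
  have hx : aeval x g = 0 := by rw [← hmk, AdjoinRoot.mk_self]
  have hdeg : g.natDegree = r.length := natDegree_monicOfCoeffs r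
  refine irreducible_of_dvd_X_pow_card_pow_sub_X (hdeg ▸ List.length_pos_iff.2 hr) ?_
    fun m hm => ?_
  · rw [← AdjoinRoot.mk_eq_zero, hmk, hdeg, hl, map_sub, map_pow, aeval_X,
      ← aeval_residueFrobenius hl hx, hfrob.ofCoeffs_eq, aeval_residueMulX hx]
    simp
  · obtain ⟨u, hu, hmu⟩ := hcover m (hdeg ▸ hm)
    have hunit : aeval x (ofCoeffs u.2 * (X ^ l ^ u.1 - X) - 1) = 0 := by
      have h1 := congrArg (aeval x) (hinv u hu).ofCoeffs_eq
      rw [aeval_residueMul hx, ofCoeffs_listAdd, map_add, aeval_residueFrobenius hl hx,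
        ofCoeffs_listSmul, map_mul, aeval_residueMulX hx] at h1
      simp only [ofCoeffs_cons, map_one, ofCoeffs_nil, mul_zero, add_zero, map_neg,
        mul_one, neg_mul, one_mul, aeval_sub, map_mul, map_pow, aeval_X] at h1 ⊢
      linear_combination -h1
    rw [← hmk, AdjoinRoot.mk_eq_zero] at hunit
    obtain ⟨v, hv⟩ := hunit
    exact ⟨u.1, hmu, -v, ofCoeffs u.2, by rw [hl]; linear_combination hv⟩

end ResidueArithmetic

section Frobenius

lemma isCoprime_of_irreducible_of_monic {k : Type*} [Field k] {g h : k[X]}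
    (hg : Irreducible g) (hh : Irreducible h) (hgm : g.Monic) (hhm : h.Monic) (hne : g ≠ h) :
    IsCoprime g h :=
  hg.coprime_iff_not_dvd.2 fun hdvd =>
    hne <| eq_of_monic_of_associated hgm hhm <| hg.associated_of_dvd hh hdvd

open Classical in
lemma card_filter_roots_map_mul {k κ : Type*} [Field k] [Field κ] (η : k →+* κ) {h h' : k[X]}
    {n : ℕ} (hne : h * h' ≠ 0) (hsplit : ((h * h').map η).Splits) (hdvd : h ∣ X ^ n - X)
    (hcop : IsCoprime h' (X ^ n - X)) :
    (((h * h').map η).roots.filter fun r => r ^ n = r).card = h.natDegree := by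
  have heval {g : k[X]} {r : κ} (hr : r ∈ (g.map η).roots) : g.eval₂ η r = 0 := by
    rw [← eval_map]
    exact (mem_roots'.1 hr).2
  have hfixed : ∀ r ∈ (h.map η).roots, r ^ n = r := fun r hr => by
    have h0 := eval₂_eq_zero_of_dvd_of_eval₂_eq_zero η r hdvd (heval hr)
    rwa [eval₂_sub, eval₂_X_pow, eval₂_X, sub_eq_zero] at h0
  have hmoved : ∀ r ∈ (h'.map η).roots, ¬ r ^ n = r := fun r hr hfix => by
    obtain ⟨u, v, huv⟩ := hcop
    have h1 := congrArg (eval₂ η r) huv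
    rw [eval₂_add, eval₂_mul, eval₂_mul, heval hr, eval₂_sub, eval₂_X_pow, eval₂_X, hfix, sub_self,
      mul_zero, mul_zero, add_zero, eval₂_one] at h1
    exact zero_ne_one h1
  have hne' : h.map η * h'.map η ≠ 0 := by
    rw [← Polynomial.map_mul]
    exact (Polynomial.map_ne_zero_iff η.injective).2 hne
  rw [Polynomial.map_mul] at hsplit ⊢
  rw [roots_mul hne', Multiset.filter_add, Multiset.filter_eq_self.2 hfixed,
    Multiset.filter_eq_nil.2 hmoved, add_zero,
    ← (hsplit.of_dvd hne' (Dvd.intro _ rfl)).natDegree_eq_card_roots, natDegree_map]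

section Place

variable {A L κ : Type*} [CommRing A] [Field L] [Algebra A L] [Field κ]

open Classical in
/-- The integral element `a • y` attached to a root `y` of `f`, where `a` is the leading
coefficient of `f`; it is `0` if `y` is not a root of `f`. -/
noncomputable def scaledRoot (f : A[X]) (y : L) : integralClosure A L :=
  if h : aeval y f = 0 then ⟨f.leadingCoeff • y, isIntegral_leadingCoeff_smul f y h⟩ else 0

/-- The reduction of a root `y` of `f` at a place `π` of the integral closure of `A` at which the
leading coefficient of `f` is a unit; as `y` need not be integral, it is computed from
`scaledRoot f y`. -/
noncomputable def rootReduction (π : integralClosure A L →+* κ) (f : A[X]) (y : L) : κ :=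
  π (scaledRoot f y) / π (algebraMap A _ f.leadingCoeff)

lemma coe_scaledRoot {f : A[X]} {y : L} (hy : aeval y f = 0) :
    (scaledRoot f y : L) = algebraMap A L f.leadingCoeff * y := by
  rw [scaledRoot, dif_pos hy, ← Algebra.smul_def]

lemma leadingCoeff_pow_mul_map_eq_prod_scaledRoot [FaithfulSMul A L] {f : A[X]}
    (hsplit : (f.map (algebraMap A L)).Splits) :
    C (algebraMap A _ f.leadingCoeff) ^ (f.aroots L).card *
        f.map (algebraMap A (integralClosure A L)) =
      C (algebraMap A _ f.leadingCoeff) * ((f.aroots L).map fun y =>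
        C (algebraMap A (integralClosure A L) f.leadingCoeff) * X - C (scaledRoot f y)).prod := by
  have hcomp : (algebraMap (integralClosure A L) L).comp (algebraMap A _) = algebraMap A L :=
    (IsScalarTower.algebraMap_eq A _ L).symm
  have hlead : algebraMap (integralClosure A L) L (algebraMap A _ f.leadingCoeff) =
      algebraMap A L f.leadingCoeff := DFunLike.congr_fun hcomp _
  have hfactor : f.map (algebraMap A L) =
      C (algebraMap A L f.leadingCoeff) * ((f.aroots L).map fun y => X - C y).prod := by
    rw [← leadingCoeff_map_of_injective (FaithfulSMul.algebraMap_injective A L) f]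
    exact hsplit.eq_prod_roots
  have hlinear : (f.aroots L).map (map (algebraMap (integralClosure A L) L) ∘ fun y =>
        C (algebraMap A (integralClosure A L) f.leadingCoeff) * X - C (scaledRoot f y)) =
      (f.aroots L).map fun y => C (algebraMap A L f.leadingCoeff) * (X - C y) := by
    refine Multiset.map_congr rfl fun y hy => ?_
    have hcoe : algebraMap (integralClosure A L) L (scaledRoot f y) =
        algebraMap A L f.leadingCoeff * y :=
      coe_scaledRoot (mem_aroots'.1 hy).2
    simp only [Function.comp_apply, Polynomial.map_sub, Polynomial.map_mul, map_C, map_X, hcoe,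
      hlead, C_mul, mul_sub]
  apply map_injective (algebraMap (integralClosure A L) L) Subtype.val_injective
  simp only [Polynomial.map_mul, Polynomial.map_pow, map_C, Polynomial.map_map,
    hcomp, hlead, Polynomial.map_multiset_prod, Multiset.map_map, hlinear, Multiset.prod_map_mul,
    Multiset.map_const', Multiset.prod_replicate]
  rw [hfactor]
  ring

lemma map_eq_prod_X_sub_C_rootReduction [FaithfulSMul A L] (π : integralClosure A L →+* κ)
    {f : A[X]} (hsplit : (f.map (algebraMap A L)).Splits)
    (hlead : π (algebraMap A _ f.leadingCoeff) ≠ 0) :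
    f.map (π.comp (algebraMap A _)) = C (π (algebraMap A _ f.leadingCoeff)) *
      ((f.aroots L).map fun y => X - C (rootReduction π f y)).prod := by
  set a := π (algebraMap A _ f.leadingCoeff) with ha
  have hlinear : (f.aroots L).map (map π ∘ fun y =>
        C (algebraMap A (integralClosure A L) f.leadingCoeff) * X - C (scaledRoot f y)) =
      (f.aroots L).map fun y => C a * (X - C (rootReduction π f y)) := by
    refine Multiset.map_congr rfl fun y _ => ?_
    simp only [Function.comp_apply, Polynomial.map_sub, Polynomial.map_mul, map_C, map_X, ← ha,
      mul_sub, ← C_mul, rootReduction, mul_div_cancel₀ _ hlead]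
  have hmap := congrArg (map π) (leadingCoeff_pow_mul_map_eq_prod_scaledRoot hsplit)
  simp only [Polynomial.map_mul, Polynomial.map_pow, map_C, Polynomial.map_map, ← ha,
    Polynomial.map_multiset_prod, Multiset.map_map, hlinear, Multiset.prod_map_mul,
    Multiset.map_const', Multiset.prod_replicate] at hmap
  apply mul_left_cancel₀ (pow_ne_zero (f.aroots L).card (C_ne_zero.2 hlead))
  rw [hmap]
  ring

lemma roots_map_eq_map_rootReduction [FaithfulSMul A L] (π : integralClosure A L →+* κ)
    {f : A[X]} (hsplit : (f.map (algebraMap A L)).Splits)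
    (hlead : π (algebraMap A _ f.leadingCoeff) ≠ 0) :
    (f.map (π.comp (algebraMap A _))).roots = (f.aroots L).map (rootReduction π f) := by
  rw [map_eq_prod_X_sub_C_rootReduction π hsplit hlead, roots_C_mul _ hlead,
    ← roots_multiset_prod_X_sub_C ((f.aroots L).map (rootReduction π f)), Multiset.map_map]
  rfl

lemma splits_map_of_splits [FaithfulSMul A L] (π : integralClosure A L →+* κ)
    {f : A[X]} (hsplit : (f.map (algebraMap A L)).Splits)
    (hlead : π (algebraMap A _ f.leadingCoeff) ≠ 0) :
    (f.map (π.comp (algebraMap A _))).Splits := by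
  rw [map_eq_prod_X_sub_C_rootReduction π hsplit hlead]
  refine Splits.mul (Splits.C _) (Splits.multisetProd fun g hg => ?_)
  obtain ⟨y, _, rfl⟩ := Multiset.mem_map.1 hg
  exact Splits.X_sub_C _

end Place

section ArithFrob

universe u

variable {A M k : Type*} {L : Type u} [CommRing A] [Field M] [Field L] [Field k]
  [Algebra A M] [Algebra M L] [Algebra A L] [IsScalarTower A M L]

lemma algEquiv_mem_aroots {f : A[X]} (τ : L ≃ₐ[M] L) {y : L} (hy : y ∈ f.aroots L) :
    τ y ∈ f.aroots L := by
  obtain ⟨hf, hy⟩ := mem_aroots'.1 hy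
  refine mem_aroots'.2 ⟨hf, ?_⟩
  have h := aeval_algHom_apply (τ.toAlgHom.restrictScalars A) y f
  rwa [hy, map_zero] at h

/-- `σ` acts on the residue field `κ` of a place `π` above the place `θ` of `A` as the Frobenius
`x ↦ x ^ #k`. -/
structure IsFrobeniusAt {κ : Type*} [Field κ] (θ : A →+* k) (π : integralClosure A L →+* κ)
    (η : k →+* κ) (σ : L ≃ₐ[M] L) : Prop where
  comp_eq : η.comp θ = π.comp (algebraMap A _)
  apply_eq_pow : ∀ s s' : integralClosure A L, (s' : L) = σ s → π s' = π s ^ Nat.card k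

variable [Finite k]

lemma exists_isFrobeniusAt [IsDomain A] [IsIntegrallyClosed A] [IsNoetherianRing A]
    [IsFractionRing A M] [FiniteDimensional M L] [IsGalois M L] (θ : A →+* k)
    (hθ : Function.Surjective θ) :
    ∃ (κ : Type u) (_ : Field κ) (π : integralClosure A L →+* κ) (η : k →+* κ) (σ : L ≃ₐ[M] L),
      IsFrobeniusAt θ π η σ := by
  let S := integralClosure A L
  have : FaithfulSMul A L := by
    have := IsFractionRing.instFaithfulSMul A M
    exact .trans A M L
  have : Module.Finite A S := IsIntegralClosure.finite A M L S
  have : IsFractionRing S L := integralClosure.isFractionRing_of_finite_extension M L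
  let := IsIntegralClosure.MulSemiringAction A M L S
  have : SMulCommClass (L ≃ₐ[M] L) A S := ⟨fun g r s => map_smul (galRestrict A M L S g) r s⟩
  have : Algebra.IsInvariant A S (L ≃ₐ[M] L) := Algebra.isInvariant_of_isGalois A M L S
  have : (RingHom.ker θ).IsMaximal := RingHom.ker_isMaximal_of_surjective θ hθ
  let e : A ⧸ RingHom.ker θ ≃+* k := RingHom.quotientKerEquivOfSurjective hθ
  have : Finite (A ⧸ RingHom.ker θ) := Finite.of_equiv _ e.symm.toEquiv
  obtain ⟨Q, _, hQ⟩ := Ideal.exists_maximal_ideal_liesOver_of_isIntegral (S := S) (RingHom.ker θ)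
  have : Finite (S ⧸ Q) := Module.finite_of_finite (A ⧸ RingHom.ker θ)
  obtain ⟨σ, hσ⟩ := IsArithFrobAt.exists_of_isInvariant A (L ≃ₐ[M] L) Q
  let π := Ideal.Quotient.mk Q
  have hker : RingHom.ker θ ≤ RingHom.ker (π.comp (algebraMap A S)) := fun r hr => by
    rw [hQ.over] at hr
    exact Ideal.Quotient.eq_zero_iff_mem.2 hr
  let := Ideal.Quotient.field Q
  refine ⟨S ⧸ Q, inferInstance, π, RingHom.liftOfSurjective θ hθ ⟨_, hker⟩, σ, ?_, ?_⟩
  · exact RingHom.liftOfRightInverse_comp θ _ _ _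
  · intro s s' hs
    have hcard : Nat.card (A ⧸ Q.under A) = Nat.card k := by
      rw [← hQ.over, Nat.card_congr e.toEquiv]
    have hs' : MulSemiringAction.toAlgHom A S σ s = s' :=
      Subtype.ext <| (algebraMap_galRestrict_apply A σ s).trans hs.symm
    rw [← map_pow, ← hcard, ← hs']
    exact Ideal.Quotient.eq.2 (hσ s)

variable {κ : Type*} [Field κ] {θ : A →+* k} {π : integralClosure A L →+* κ}
  {η : k →+* κ} {σ : L ≃ₐ[M] L} {f : A[X]}

lemma IsFrobeniusAt.rootReduction_pow_apply (hσ : IsFrobeniusAt θ π η σ)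
    (d : ℕ) {y : L} (hy : y ∈ f.aroots L) :
    rootReduction π f ((σ ^ d) y) = rootReduction π f y ^ Nat.card k ^ d := by
  induction d with
  | zero => simp
  | succ d ih =>
    set y' := (σ ^ d) y
    have hy' : y' ∈ f.aroots L := algEquiv_mem_aroots _ hy
    have hscaled : π (scaledRoot f (σ y')) = π (scaledRoot f y') ^ Nat.card k := by
      refine hσ.apply_eq_pow _ _ ?_
      rw [coe_scaledRoot (mem_aroots'.1 hy').2,
        coe_scaledRoot (mem_aroots'.1 (algEquiv_mem_aroots σ hy')).2, map_mul,
        IsScalarTower.algebraMap_apply A M L, AlgEquiv.commutes]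
    have hlead : π (algebraMap A _ f.leadingCoeff) ^ Nat.card k =
        π (algebraMap A _ f.leadingCoeff) := by
      have := Fintype.ofFinite k
      rw [← RingHom.comp_apply, ← hσ.comp_eq, RingHom.comp_apply, ← map_pow,
        Nat.card_eq_fintype_card, FiniteField.pow_card]
    rw [pow_succ', AlgEquiv.mul_apply, rootReduction, hscaled, pow_succ (Nat.card k), pow_mul, ← ih,
      rootReduction, div_pow, hlead]

lemma IsFrobeniusAt.pow_apply_eq_self_iff (hσ : IsFrobeniusAt θ π η σ)
    (hnodup : ((f.aroots L).map (rootReduction π f)).Nodup) (d : ℕ) {y : L}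
    (hy : y ∈ f.aroots L) :
    (σ ^ d) y = y ↔ rootReduction π f y ^ Nat.card k ^ d = rootReduction π f y := by
  rw [← hσ.rootReduction_pow_apply d hy]
  exact ⟨congrArg _, Multiset.inj_on_of_nodup_map hnodup _ (algEquiv_mem_aroots _ hy) _ hy⟩

lemma IsFrobeniusAt.ncard_fixed_eq_natDegree [FaithfulSMul A L] (hσ : IsFrobeniusAt θ π η σ)
    (hsplit : (f.map (algebraMap A L)).Splits) (hlead : θ f.leadingCoeff ≠ 0)
    (hsep : (f.map θ).Separable) {d : ℕ} {h h' : k[X]} (hfactor : f.map θ = h * h')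
    (hdvd : h ∣ X ^ Nat.card k ^ d - X) (hcop : IsCoprime h' (X ^ Nat.card k ^ d - X)) :
    {y : L | aeval y f = 0 ∧ (σ ^ d) y = y}.ncard = h.natDegree := by
  classical
  have hlead' : π (algebraMap A _ f.leadingCoeff) ≠ 0 := by
    rw [← RingHom.comp_apply, ← hσ.comp_eq, RingHom.comp_apply]
    exact (map_ne_zero η).2 hlead
  have hmap : f.map (π.comp (algebraMap A _)) = (f.map θ).map η := by
    rw [← hσ.comp_eq, Polynomial.map_map]
  have hroots : ((f.map θ).map η).roots = (f.aroots L).map (rootReduction π f) := by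
    rw [← roots_map_eq_map_rootReduction π hsplit hlead', hmap]
  have hnodup : ((f.aroots L).map (rootReduction π f)).Nodup := hroots ▸ nodup_roots hsep.map
  have hsplit' : ((f.map θ).map η).Splits := hmap ▸ splits_map_of_splits π hsplit hlead'
  have hfL : f.map (algebraMap A L) ≠ 0 := by
    rw [Polynomial.map_ne_zero_iff (FaithfulSMul.algebraMap_injective A L)]
    rintro rfl
    exact hlead (map_zero θ)
  have hset : {y : L | aeval y f = 0 ∧ (σ ^ d) y = y} = ((f.aroots L).filter fun y =>
      rootReduction π f y ^ Nat.card k ^ d = rootReduction π f y).toFinset := by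
    ext y
    rw [Set.mem_ofPred_eq, Finset.mem_coe, Multiset.mem_toFinset, Multiset.mem_filter]
    refine ⟨fun ⟨hy, hfix⟩ => ?_, fun ⟨hy, hfix⟩ =>
      ⟨(mem_aroots'.1 hy).2, (hσ.pow_apply_eq_self_iff hnodup d hy).2 hfix⟩⟩
    have hy' : y ∈ f.aroots L := mem_aroots'.2 ⟨hfL, hy⟩
    exact ⟨hy', (hσ.pow_apply_eq_self_iff hnodup d hy').1 hfix⟩
  rw [hset, Set.ncard_coe_finset, Multiset.toFinset_card_of_nodup (hnodup.of_map.filter _)]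
  have hcount := card_filter_roots_map_mul η (hfactor ▸ hsep.ne_zero) (hfactor ▸ hsplit') hdvd hcop
  rwa [← hfactor, hroots, Multiset.filter_map, Multiset.card_map] at hcount

/-- Dedekind's theorem, with the cycle type of a Frobenius element expressed by the fixed points of
its powers. -/
theorem exists_ncard_fixed_eq_sum_natDegree [IsDomain A] [IsIntegrallyClosed A] [IsNoetherianRing A]
    [IsFractionRing A M] [FiniteDimensional M L] [IsGalois M L] (θ : A →+* k)
    (hθ : Function.Surjective θ) {f : A[X]} (hsplit : (f.map (algebraMap A L)).Splits)
    (hlead : θ f.leadingCoeff ≠ 0) {c : k} {gs : Finset k[X]} (hmonic : ∀ g ∈ gs, g.Monic)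
    (hirr : ∀ g ∈ gs, Irreducible g) (hfactor : f.map θ = C c * ∏ g ∈ gs, g) :
    ∃ σ : L ≃ₐ[M] L, ∀ d, {y : L | aeval y f = 0 ∧ (σ ^ d) y = y}.ncard =
      ∑ g ∈ gs with g.natDegree ∣ d, g.natDegree := by
  have : FaithfulSMul A L := by
    have := IsFractionRing.instFaithfulSMul A M
    exact .trans A M L
  obtain ⟨κ, _, π, η, σ, hσ⟩ := exists_isFrobeniusAt (M := M) (L := L) θ hθ
  have hpairwise : (gs : Set k[X]).Pairwise (Function.onFun IsCoprime id) := fun g hg g' hg' hne =>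
    isCoprime_of_irreducible_of_monic (hirr g hg) (hirr g' hg') (hmonic g hg) (hmonic g' hg') hne
  have hne : f.map θ ≠ 0 := fun h => hlead <| by
    rw [leadingCoeff, ← coeff_map, h, coeff_zero]
  have hc : c ≠ 0 := by
    rintro rfl
    rw [C_0, zero_mul] at hfactor
    exact hne hfactor
  have hsep : (f.map θ).Separable := by
    rw [hfactor]
    exact .unit_mul (isUnit_C.2 hc.isUnit) <| separable_prod'
      (fun g hg g' hg' hne => hpairwise hg hg' hne)
      fun g hg => PerfectField.separable_of_irreducible (hirr g hg)
  refine ⟨σ, fun d => ?_⟩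
  rw [hσ.ncard_fixed_eq_natDegree (h := ∏ g ∈ gs with g.natDegree ∣ d, g)
    (h' := C c * ∏ g ∈ gs with ¬ g.natDegree ∣ d, g) hsplit hlead hsep ?_ ?_ ?_]
  · exact natDegree_prod_of_monic _ _ fun g hg => hmonic g (Finset.mem_filter.1 hg).1
  · rw [hfactor, ← Finset.prod_filter_mul_prod_filter_not gs (fun g => g.natDegree ∣ d)]
    ring
  · refine Finset.prod_dvd_of_coprime
      (hpairwise.mono (Finset.coe_subset.2 (Finset.filter_subset _ gs))) fun g hg => ?_
    have ⟨hg, hd⟩ := Finset.mem_filter.1 hg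
    exact (hirr g hg).natDegree_dvd_iff_dvd_X_pow_card_pow_sub_X.1 hd
  · refine (isCoprime_mul_unit_left_left (isUnit_C.2 hc.isUnit) _ _).2 ?_
    refine IsCoprime.prod_left fun g hg => ?_
    have ⟨hg, hd⟩ := Finset.mem_filter.1 hg
    exact (hirr g hg).coprime_iff_not_dvd.2 fun hdvd =>
      hd ((hirr g hg).natDegree_dvd_iff_dvd_X_pow_card_pow_sub_X.2 hdvd)

end ArithFrob

end Frobenius

section FactorizationCertificates

variable {R : Type*}

/-- A certificate for the factorization of the polynomial with coefficient list `f` over a field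
with `l` elements as `c` times a product of distinct irreducible polynomials `monicOfCoeffs g.1`,
where `g.2` certifies that the factor is irreducible. -/
def IsFactorizationCertificate [Add R] [Mul R] [Neg R] [One R] [Zero R] (l : ℕ)
    (f : List R) (c : R) (gs : List (List R × List (ℕ × List R))) : Prop :=
  SameCoeffs f (listSmul c ((gs.map fun g => listSmul (-1) g.1 ++ [1]).foldr listMul [1])) ∧
    (gs.map Prod.fst).Nodup ∧ ∀ g ∈ gs, IsRabinCertificate l g.1 g.2

instance [DecidableEq R] [Add R] [Mul R] [Neg R] [One R] [Zero R] (l : ℕ) (f : List R) (c : R)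
    (gs : List (List R × List (ℕ × List R))) : Decidable (IsFactorizationCertificate l f c gs) :=
  inferInstanceAs (Decidable (_ ∧ _ ∧ _))

lemma ofCoeffs_foldr_listMul [CommRing R] (gs : List (List R)) :
    ofCoeffs ((gs.map fun g => listSmul (-1) g ++ [1]).foldr listMul [1]) =
      (gs.map monicOfCoeffs).prod := by
  induction gs with
  | nil => simp
  | cons g gs ih => simp [ih, ofCoeffs_listMul, monicOfCoeffs_eq_ofCoeffs]

lemma IsFactorizationCertificate.exists_factors {k : Type*} [Field k] [Finite k]
    {l : ℕ} (hl : Nat.card k = l) {a : List k} {c : k} {gs : List (List k × List (ℕ × List k))}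
    (hcert : IsFactorizationCertificate l a c gs) :
    ∃ factors : Finset k[X], (∀ g ∈ factors, g.Monic) ∧ (∀ g ∈ factors, Irreducible g) ∧
      ofCoeffs a = C c * ∏ g ∈ factors, g ∧
      ∀ d, ∑ g ∈ factors with g.natDegree ∣ d, g.natDegree =
        ((gs.map fun g => g.1.length).filter (· ∣ d)).sum := by
  classical
  obtain ⟨hprod, hnodup, hrabin⟩ := hcert
  have hnodup' : ((gs.map Prod.fst).map monicOfCoeffs).Nodup := hnodup.map monicOfCoeffs_injective
  have hmem {g : k[X]} (hg : g ∈ ((gs.map Prod.fst).map monicOfCoeffs).toFinset) :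
      ∃ r ∈ gs, monicOfCoeffs r.1 = g := by
    simpa [and_assoc] using hg
  refine ⟨((gs.map Prod.fst).map monicOfCoeffs).toFinset, fun g hg => ?_, fun g hg => ?_, ?_,
    fun d => ?_⟩
  · obtain ⟨r, -, rfl⟩ := hmem hg
    exact monic_monicOfCoeffs _
  · obtain ⟨r, hr, rfl⟩ := hmem hg
    exact (hrabin r hr).irreducible hl
  · rw [hprod.ofCoeffs_eq, ofCoeffs_listSmul, List.prod_toFinset _ hnodup', List.map_id',
      ← ofCoeffs_foldr_listMul, List.map_map]
    rfl
  · have hfilter : ((gs.map Prod.fst).map monicOfCoeffs).toFinset.filter (·.natDegree ∣ d) =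
        (((gs.map Prod.fst).map monicOfCoeffs).filter (·.natDegree ∣ d)).toFinset := by
      simp [List.toFinset_filter]
    rw [hfilter, List.sum_toFinset _ (hnodup'.filter _)]
    simp [List.filter_map, Function.comp_def, natDegree_monicOfCoeffs]

universe u

variable {A M k : Type*} {L : Type u} [CommRing A] [IsDomain A] [IsIntegrallyClosed A]
  [IsNoetherianRing A] [Field M] [Field L] [Field k] [Finite k]
  [Algebra A M] [IsFractionRing A M] [Algebra M L] [FiniteDimensional M L] [IsGalois M L]
  [Algebra A L] [IsScalarTower A M L]

theorem IsFactorizationCertificate.exists_ncard_fixed_eq {l : ℕ} (hl : Nat.card k = l)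
    {θ : A →+* k} (hθ : Function.Surjective θ) {f : A[X]} {a : List k} {c : k}
    {gs : List (List k × List (ℕ × List k))} (hcert : IsFactorizationCertificate l a c gs)
    (hsplit : (f.map (algebraMap A L)).Splits) (hmap : f.map θ = ofCoeffs a) (hc : c ≠ 0)
    (hdeg : f.natDegree ≤ (gs.map fun g => g.1.length).sum) :
    ∃ σ : L ≃ₐ[M] L, ∀ d, {y : L | aeval y f = 0 ∧ (σ ^ d) y = y}.ncard =
      ((gs.map fun g => g.1.length).filter (· ∣ d)).sum := by
  obtain ⟨factors, hmonic, hirr, hfactor, hsum⟩ := hcert.exists_factors hl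
  rw [← hmap] at hfactor
  have hdeg_map : (f.map θ).natDegree = (gs.map fun g => g.1.length).sum := by
    rw [hfactor, natDegree_C_mul hc, natDegree_prod_of_monic _ _ hmonic]
    simpa using hsum 0
  have hlead : θ f.leadingCoeff ≠ 0 := by
    have heq : f.natDegree = (f.map θ).natDegree :=
      (hdeg.trans hdeg_map.ge).antisymm natDegree_map_le
    rw [leadingCoeff, ← coeff_map, heq, ← leadingCoeff, leadingCoeff_ne_zero, hfactor]
    exact mul_ne_zero (C_ne_zero.2 hc) (Finset.prod_ne_zero_iff.2 fun g hg => (hirr g hg).ne_zero)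
  obtain ⟨σ, hσ⟩ :=
    exists_ncard_fixed_eq_sum_natDegree (M := M) θ hθ hsplit hlead hmonic hirr hfactor
  exact ⟨σ, fun d => (hσ d).trans (hsum d)⟩

end FactorizationCertificates

section GenericFibre

variable {k : Type*} [Field k] {a b : k[X]}

lemma transcendental_ratFuncX : Transcendental k (RatFunc.X : RatFunc k) := by
  rw [← RatFunc.algebraMap_X]
  exact (transcendental_algebraMap_iff (RatFunc.algebraMap_injective k)).2 (transcendental_X k)

lemma natDegree_map_sub_C_X_mul_map (hab : a.natDegree ≤ b.natDegree) (hb : 0 < b.natDegree) :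
    (a.map RatFunc.C - C RatFunc.X * b.map RatFunc.C).natDegree = b.natDegree := by
  refine le_antisymm ((natDegree_sub_le _ _).trans (max_le (natDegree_map_le.trans hab)
    ((natDegree_C_mul_le _ _).trans natDegree_map_le))) (le_natDegree_of_ne_zero fun h => ?_)
  have hlead : b.leadingCoeff ≠ 0 := leadingCoeff_ne_zero.2 (ne_zero_of_natDegree_gt hb)
  rw [coeff_sub, coeff_C_mul, coeff_map, coeff_map, sub_eq_zero] at h
  refine transcendental_ratFuncX (k := k) ?_
  have hX : (RatFunc.X : RatFunc k) = RatFunc.C (a.coeff b.natDegree / b.leadingCoeff) := by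
    rw [map_div₀, h, leadingCoeff, mul_div_cancel_right₀]
    exact (_root_.map_ne_zero _).2 hlead
  rw [hX]
  exact isAlgebraic_algebraMap (A := RatFunc k) _

theorem irreducible_map_sub_C_X_mul_map (hcop : IsCoprime a b) (hab : a.natDegree ≤ b.natDegree)
    (hb : 0 < b.natDegree) :
    Irreducible (a.map RatFunc.C - C RatFunc.X * b.map RatFunc.C) := by
  set f : k[X][X] := a.map C - C X * b.map C with hf
  have hmap : f.map (algebraMap k[X] (RatFunc k)) =
      a.map RatFunc.C - C RatFunc.X * b.map RatFunc.C := by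
    have hcomp : (algebraMap k[X] (RatFunc k)).comp C = RatFunc.C := by
      ext; simp
    rw [hf, Polynomial.map_sub, Polynomial.map_mul, map_C, RatFunc.algebraMap_X,
      Polynomial.map_map, Polynomial.map_map, hcomp]
  -- Exchanging the variables makes `f` linear with coprime coefficients.
  have hirr : Irreducible f := by
    have hlin : Irreducible (C (-b) * X + C a : k[X][X]) :=
      irreducible_C_mul_X_add_C (neg_ne_zero.2 (ne_zero_of_natDegree_gt hb))
        hcop.symm.neg_left.isRelPrime
    have hswap : Bivariate.swap (R := k) (C (-b) * X + C a) = f := by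
      simp only [map_neg, map_add, map_mul, Bivariate.swap_C, Bivariate.swap_Y, hf]
      ring
    exact hswap ▸ (MulEquiv.irreducible_iff (Bivariate.swap (R := k))).2 hlin
  have hdeg : f.natDegree ≠ 0 := fun h => by
    have := natDegree_map_le (p := f) (f := algebraMap k[X] (RatFunc k))
    rw [hmap, natDegree_map_sub_C_X_mul_map hab hb] at this
    omega
  rw [← hmap]
  exact ((hirr.isPrimitive hdeg).irreducible_iff_irreducible_map_fraction_map).1 hirr

end GenericFibre

section BelyiMap

/-- Integer coefficients of the first base of the power product `p`, constant term first. -/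
def pFactorCoeffs₁ : List ℤ := [50, -95, 40, 30, -30, 7]

/-- Integer coefficients of the second base of the power product `p`, constant term first. -/
def pFactorCoeffs₂ : List ℤ := [-125, 250, -175, -100, 425, -550, 435, -240, 90, -20, 2]

/-- Integer coefficients of the third base of the power product `p`, constant term first. -/
def pFactorCoeffs₃ : List ℤ := [125, 0, -50, 0, 50, 0, -40, 0, 5, 0, 2]

/-- Integer coefficients of the first nonconstant base of the power product `q`, constant term
first. -/
def qFactorCoeffs₁ : List ℤ := [-5, 0, 0, 0, 1]

/-- Integer coefficients of the second nonconstant base of the power product `q`, constant term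
first. -/
def qFactorCoeffs₂ : List ℤ := [25, -100, 100, 0, -70, 60, -20, 0, 1]

/-- The coefficients of `p`, constant term first. -/
def pCoeffs : List ℤ :=
  listMul (listMul (listPow pFactorCoeffs₁ 4) (listPow pFactorCoeffs₂ 4)) (listPow pFactorCoeffs₃ 4)

/-- The coefficients of `q`, constant term first. -/
def qCoeffs : List ℤ :=
  listMul (listMul (listPow [2] 8) (listPow qFactorCoeffs₁ 5)) (listPow qFactorCoeffs₂ 10)

lemma map_ofCoeffs_pCoeffs : (ofCoeffs pCoeffs).map (Int.castRingHom ℚ) = p := by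
  simp only [pCoeffs, p, pFactorCoeffs₁, pFactorCoeffs₂, pFactorCoeffs₃, ofCoeffs_listMul,
    ofCoeffs_listPow, Polynomial.map_mul, Polynomial.map_pow]
  congr 3 <;> simp <;> ring

lemma map_ofCoeffs_qCoeffs : (ofCoeffs qCoeffs).map (Int.castRingHom ℚ) = q := by
  simp only [qCoeffs, q, qFactorCoeffs₁, qFactorCoeffs₂, ofCoeffs_listMul, ofCoeffs_listPow,
    Polynomial.map_mul, Polynomial.map_pow]
  congr 3 <;> simp <;> ring

/-- Cofactor of the product of the bases of `p` in a Bézout identity with right-hand side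
`2000000000`. -/
def bezoutLeft : List ℤ :=
  [-13936658875, 46758688625, -25530839125, -16628583075, 31089390800, -24472330950, 6430684100,
   4197386370, -5649738605, 3031256245, -260130055, -171141919]

/-- Cofactor of the product of the nonconstant bases of `q` in a Bézout identity with right-hand
side `2000000000`. -/
def bezoutRight : List ℤ :=
  [87104101968750, -283531456109375, 304551608078125, 84157242062500, -608393145218750,
   762175995593750, -454045096781250, 85032672931250, 20701734117500, 30868826238750,
   8731847048750, -144339967538750, 202232328046500, -122409395100000, 4151249524000,
   55821752799250, -49605599106150, 20139140553625, -624779087075, -4395710039950, 3118926138690,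
   -1299273845630, 360438363130, -61173126060, 4791973732]

lemma isCoprime_p_q : IsCoprime p q := by
  have hbezout : SameCoeffs [2000000000]
      (listAdd (listMul bezoutLeft (listMul (listMul pFactorCoeffs₁ pFactorCoeffs₂) pFactorCoeffs₃))
        (listMul bezoutRight (listMul qFactorCoeffs₁ qFactorCoeffs₂))) := by decide +kernel
  let cast (a : List ℤ) : ℚ[X] := (ofCoeffs a).map (Int.castRingHom ℚ)
  have hfactors : IsCoprime (cast pFactorCoeffs₁ * cast pFactorCoeffs₂ * cast pFactorCoeffs₃)
      (cast qFactorCoeffs₁ * cast qFactorCoeffs₂) := by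
    have h := congrArg (map (Int.castRingHom ℚ)) hbezout.ofCoeffs_eq
    simp only [ofCoeffs_cons, ofCoeffs_nil, mul_zero, add_zero, map_C, ofCoeffs_listAdd,
      ofCoeffs_listMul, Polynomial.map_add, Polynomial.map_mul] at h
    refine ⟨C 2000000000⁻¹ * cast bezoutLeft, C 2000000000⁻¹ * cast bezoutRight, ?_⟩
    rw [mul_assoc (C _), mul_assoc (C _), ← mul_add, ← h, ← C_mul]
    norm_num
  have hunit : IsUnit (cast [2]) := by
    rw [show cast [2] = C 2 by simp [cast, map_ofCoeffs]]
    exact isUnit_C.2 (IsUnit.mk0 2 two_ne_zero)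
  rw [← map_ofCoeffs_pCoeffs, ← map_ofCoeffs_qCoeffs, pCoeffs, qCoeffs]
  simp only [ofCoeffs_listMul, ofCoeffs_listPow, Polynomial.map_mul, Polynomial.map_pow]
  rw [← mul_pow, ← mul_pow]
  exact .pow_left <| .mul_right
    (.mul_right (.pow_right (isCoprime_one_right.of_isCoprime_of_dvd_right hunit.dvd))
      (.pow_right hfactors.of_mul_right_left)) (.pow_right hfactors.of_mul_right_right)

lemma natDegree_p_le : p.natDegree ≤ 100 := by
  rw [← map_ofCoeffs_pCoeffs]
  exact natDegree_map_le.trans (natDegree_ofCoeffs_le_of_length_le (by decide +kernel))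

lemma natDegree_q : q.natDegree = 100 := by
  have hlead : qCoeffs.getD 100 0 = 256 := by decide +kernel
  rw [← map_ofCoeffs_qCoeffs]
  refine (natDegree_map_le.trans
    (natDegree_ofCoeffs_le_of_length_le (by decide +kernel))).antisymm (le_natDegree_of_ne_zero ?_)
  rw [coeff_map, coeff_ofCoeffs, hlead]
  norm_num

lemma F_eq_map_C : F = p.map RatFunc.C - C RatFunc.X * q.map RatFunc.C := by
  rw [F, Subsingleton.elim (algebraMap ℚ (RatFunc ℚ)) RatFunc.C]

lemma natDegree_F : F.natDegree = 100 := by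
  rw [F_eq_map_C, natDegree_map_sub_C_X_mul_map (natDegree_p_le.trans natDegree_q.ge)
    (by simp [natDegree_q]), natDegree_q]

lemma irreducible_F : Irreducible F := by
  rw [F_eq_map_C]
  exact irreducible_map_sub_C_X_mul_map isCoprime_p_q (natDegree_p_le.trans natDegree_q.ge)
    (by simp [natDegree_q])

end BelyiMap

section KroneckerSubstitution

/-- The value at `x` of the polynomial with the given list of coefficients. -/
def listEval {R : Type*} [Add R] [Mul R] [Zero R] (x : R) : List R → R
  | [] => 0
  | c :: a => c + x * listEval x a

/-- The bivariate polynomial whose coefficient of `Y ^ j` is given by the `j`-th coefficient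
list. -/
noncomputable def ofCoeffs₂ {R : Type*} [Semiring R] (A : List (List R)) : R[X][X] :=
  ofCoeffs (A.map ofCoeffs)

/-- The sum of the absolute values of all coefficients. -/
def coeffNorm₂ (A : List (List ℤ)) : ℤ := (A.map fun a => (a.map abs).sum).sum

lemma eval_ofCoeffs {R : Type*} [CommSemiring R] (x : R) (a : List R) :
    (ofCoeffs a).eval x = listEval x a := by
  induction a with
  | nil => simp [listEval]
  | cons c a ih => simp [listEval, ih]

lemma map_ofCoeffs₂ {R S : Type*} [Semiring R] [Semiring S] (φ : R[X] →+* S) (A : List (List R)) :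
    (ofCoeffs₂ A).map φ = ofCoeffs (A.map fun a => φ (ofCoeffs a)) := by
  rw [ofCoeffs₂, map_ofCoeffs, List.map_map]
  rfl

lemma evalEval_ofCoeffs₂ {R : Type*} [CommRing R] (x y : R) (A : List (List R)) :
    (ofCoeffs₂ A).evalEval x y = listEval y (A.map (listEval x)) := by
  simp only [← map_evalRingHom_eval, map_ofCoeffs₂, eval_ofCoeffs, coe_evalRingHom]

lemma coeff_ofCoeffs₂ {R : Type*} [Semiring R] (A : List (List R)) (j : ℕ) :
    (ofCoeffs₂ A).coeff j = ofCoeffs (A.getD j []) := by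
  rw [ofCoeffs₂, coeff_ofCoeffs, ← ofCoeffs_nil, List.getD_map]

lemma natDegree_coeff_ofCoeffs₂_le {R : Type*} [Semiring R] {A : List (List R)} {n : ℕ}
    (hA : ∀ a ∈ A, a.length ≤ n + 1) (j : ℕ) : ((ofCoeffs₂ A).coeff j).natDegree ≤ n := by
  rw [coeff_ofCoeffs₂]
  refine natDegree_ofCoeffs_le_of_length_le ?_
  rcases lt_or_ge j A.length with hj | hj
  · rw [List.getD_eq_getElem _ _ hj]
    exact hA _ (List.getElem_mem hj)
  · rw [List.getD_eq_default _ _ hj]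
    exact Nat.zero_le _

lemma abs_coeff_ofCoeffs_le {a : List ℤ} {c : ℤ} (hc : 0 ≤ c) (ha : ∀ x ∈ a, |x| ≤ c) (i : ℕ) :
    |(ofCoeffs a).coeff i| ≤ c := by
  rw [coeff_ofCoeffs]
  rcases lt_or_ge i a.length with hi | hi
  · rw [List.getD_eq_getElem _ _ hi]
    exact ha _ (List.getElem_mem hi)
  · rwa [List.getD_eq_default _ _ hi, abs_zero]

lemma abs_coeff_ofCoeffs₂_le {A : List (List ℤ)} {c : ℤ} (hc : 0 ≤ c)
    (hA : ∀ a ∈ A, ∀ x ∈ a, |x| ≤ c) (j i : ℕ) : |((ofCoeffs₂ A).coeff j).coeff i| ≤ c := by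
  rw [coeff_ofCoeffs₂]
  refine abs_coeff_ofCoeffs_le hc (fun x hx => ?_) i
  rcases lt_or_ge j A.length with hj | hj
  · rw [List.getD_eq_getElem _ _ hj] at hx
    exact hA _ (List.getElem_mem hj) x hx
  · rw [List.getD_eq_default _ _ hj] at hx
    exact absurd hx List.not_mem_nil

lemma abs_coeff_ofCoeffs_mul_le (a : List ℤ) {g : ℤ[X]} {c : ℤ} (hg : ∀ i, |g.coeff i| ≤ c)
    (i : ℕ) : |(ofCoeffs a * g).coeff i| ≤ (a.map abs).sum * c := by
  induction a generalizing i with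
  | nil => simp
  | cons x a ih =>
    have hX : |(X * (ofCoeffs a * g)).coeff i| ≤ (a.map abs).sum * c := by
      cases i with
      | zero => simpa using (abs_nonneg _).trans (ih 0)
      | succ i => simpa only [coeff_X_mul] using ih i
    calc |(ofCoeffs (x :: a) * g).coeff i|
        = |x * g.coeff i + (X * (ofCoeffs a * g)).coeff i| := by
          rw [ofCoeffs_cons, add_mul, mul_assoc, coeff_add, coeff_C_mul]
      _ ≤ |x| * c + (a.map abs).sum * c := (abs_add_le _ _).trans
          (add_le_add (abs_mul x _ ▸ mul_le_mul_of_nonneg_left (hg i) (abs_nonneg x)) hX)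
      _ = ((x :: a).map abs).sum * c := by rw [List.map_cons, List.sum_cons, add_mul]

lemma abs_coeff_ofCoeffs₂_mul_le (A : List (List ℤ)) {g : ℤ[X][X]} {c : ℤ}
    (hg : ∀ j i, |(g.coeff j).coeff i| ≤ c) (j i : ℕ) :
    |((ofCoeffs₂ A * g).coeff j).coeff i| ≤ coeffNorm₂ A * c := by
  rw [ofCoeffs₂, coeffNorm₂]
  induction A generalizing j with
  | nil => simp
  | cons a A ih =>
    have hX : |((X * (ofCoeffs (A.map ofCoeffs) * g)).coeff j).coeff i| ≤
        (A.map fun a => (a.map abs).sum).sum * c := by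
      cases j with
      | zero => simpa using (abs_nonneg _).trans (ih 0)
      | succ j => simpa only [coeff_X_mul] using ih j
    calc |((ofCoeffs ((a :: A).map ofCoeffs) * g).coeff j).coeff i|
        = |(ofCoeffs a * g.coeff j).coeff i +
            ((X * (ofCoeffs (A.map ofCoeffs) * g)).coeff j).coeff i| := by
          rw [List.map_cons, ofCoeffs_cons, add_mul, mul_assoc, coeff_add, coeff_C_mul, coeff_add]
      _ ≤ (a.map abs).sum * c + (A.map fun a => (a.map abs).sum).sum * c :=
          (abs_add_le _ _).trans (add_le_add (abs_coeff_ofCoeffs_mul_le a (hg j) i) hX)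
      _ = ((a :: A).map fun a => (a.map abs).sum).sum * c := by
          rw [List.map_cons, List.sum_cons, add_mul]

lemma eq_zero_of_eval_eq_zero_of_abs_coeff_lt {f : ℤ[X]} {m : ℤ} (hf : ∀ i, |f.coeff i| < m)
    (h : f.eval m = 0) : f = 0 := by
  induction hn : f.natDegree using Nat.strong_induction_on generalizing f with
  | _ n ih =>
  have hm : 0 < m := (abs_nonneg _).trans_lt (hf 0)
  have heval : f.divX.eval m * m + f.coeff 0 = 0 := by
    rw [← h]; conv_rhs => rw [← divX_mul_X_add f]
    simp
  have hzero : f.coeff 0 = 0 :=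
    Int.eq_zero_of_abs_lt_dvd ⟨-f.divX.eval m, by linear_combination heval⟩ (hf 0)
  rcases Nat.eq_zero_or_pos f.natDegree with hdeg | hdeg
  · rw [eq_C_of_natDegree_eq_zero hdeg, hzero, C_0]
  · have hdivX : f.divX = 0 := by
      refine ih _ (by rw [natDegree_divX_eq_natDegree_tsub_one]; omega) (fun i => ?_) ?_ rfl
      · rw [coeff_divX]; exact hf _
      · rw [hzero, add_zero] at heval
        exact (mul_eq_zero.1 heval).resolve_right hm.ne'
    rw [← divX_mul_X_add f, hdivX, hzero, C_0, zero_mul, add_zero]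

lemma abs_eval_lt_pow {f : ℤ[X]} {m : ℤ} {n : ℕ} (hf : ∀ i, |f.coeff i| < m)
    (hn : f.natDegree < n) : |f.eval m| < m ^ n := by
  have hm : 0 < m := (abs_nonneg _).trans_lt (hf 0)
  calc |f.eval m| = |∑ i ∈ Finset.range n, f.coeff i * m ^ i| := by
        rw [eval_eq_sum_range' hn]
    _ ≤ ∑ i ∈ Finset.range n, |f.coeff i * m ^ i| := Finset.abs_sum_le_sum_abs _ _
    _ ≤ ∑ i ∈ Finset.range n, (m - 1) * m ^ i := Finset.sum_le_sum fun i _ => by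
        rw [abs_mul, abs_of_pos (pow_pos hm i)]
        exact mul_le_mul_of_nonneg_right (Int.le_sub_one_of_lt (hf i)) (pow_pos hm i).le
    _ = m ^ n - 1 := by rw [← Finset.mul_sum, mul_geom_sum]
    _ < m ^ n := sub_one_lt _

lemma eq_zero_of_evalEval_pow_eq_zero {f : ℤ[X][X]} {m : ℤ} {n : ℕ}
    (hf : ∀ j i, |(f.coeff j).coeff i| < m) (hdeg : ∀ j, (f.coeff j).natDegree < n)
    (h : f.evalEval m (m ^ n) = 0) : f = 0 := by
  have hmap : f.map (evalRingHom m) = 0 := by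
    refine eq_zero_of_eval_eq_zero_of_abs_coeff_lt (m := m ^ n) (fun j => ?_)
      (by rwa [map_evalRingHom_eval])
    rw [coeff_map]
    exact abs_eval_lt_pow (hf j) (hdeg j)
  ext1 j
  refine eq_zero_of_eval_eq_zero_of_abs_coeff_lt (hf j) ?_
  simpa using congrArg (coeff · j) hmap

theorem ofCoeffs₂_mul_eq_of_evalEval_eq {A B : List (List ℤ)} {f : ℤ[X][X]} {b c m : ℤ} {r s n : ℕ}
    (hA : ∀ a ∈ A, a.length ≤ r + 1) (hB : ∀ a ∈ B, a.length ≤ s + 1)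
    (hdeg : ∀ j, (f.coeff j).natDegree ≤ n) (hrs : r + s ≤ n) (hb : 0 ≤ b)
    (hBb : ∀ a ∈ B, ∀ x ∈ a, |x| ≤ b) (hfc : ∀ j i, |(f.coeff j).coeff i| ≤ c)
    (hm : coeffNorm₂ A * b + c < m)
    (heval : listEval (m ^ (n + 1)) (A.map (listEval m)) *
      listEval (m ^ (n + 1)) (B.map (listEval m)) = f.evalEval m (m ^ (n + 1))) :
    ofCoeffs₂ A * ofCoeffs₂ B = f := by
  have hdeg_mul (j : ℕ) : ((ofCoeffs₂ A * ofCoeffs₂ B).coeff j).natDegree ≤ n := by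
    rw [coeff_mul]
    refine natDegree_sum_le_of_forall_le _ _ fun ij _ => natDegree_mul_le.trans ?_
    have hi := natDegree_coeff_ofCoeffs₂_le hA ij.1
    have hj := natDegree_coeff_ofCoeffs₂_le hB ij.2
    omega
  rw [← sub_eq_zero]
  refine eq_zero_of_evalEval_pow_eq_zero (m := m) (n := n + 1) (fun j i => ?_) (fun j => ?_) ?_
  · rw [coeff_sub, coeff_sub]
    have hmul := abs_coeff_ofCoeffs₂_mul_le A (abs_coeff_ofCoeffs₂_le hb hBb) j i
    exact (abs_sub _ _).trans_lt ((add_le_add hmul (hfc j i)).trans_lt hm)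
  · rw [coeff_sub]
    exact Nat.lt_succ_of_le ((natDegree_sub_le _ _).trans (max_le (hdeg_mul j) (hdeg j)))
  · rw [evalEval_sub, evalEval_mul, evalEval_ofCoeffs₂, evalEval_ofCoeffs₂, heval, sub_self]

end KroneckerSubstitution

section CrossDifference

/-- The numerator `a(Y) b(X) - a(X) b(Y)` of `a(Y) / b(Y) - a(X) / b(X)`, as a polynomial in `Y`
over `R[X]`. -/
noncomputable def crossDifference {R : Type*} [CommRing R] (a b : R[X]) : R[X][X] :=
  a.map C * C b - C a * b.map C

lemma coeff_crossDifference {R : Type*} [CommRing R] (a b : R[X]) (j : ℕ) :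
    (crossDifference a b).coeff j = C (a.coeff j) * b - C (b.coeff j) * a := by
  simp only [crossDifference, coeff_sub, coeff_mul_C, coeff_C_mul, coeff_map, mul_comm a]

lemma map_crossDifference {R S : Type*} [CommRing R] [CommRing S] (φ : R →+* S) (x : S)
    (a b : R[X]) :
    (crossDifference a b).map (eval₂RingHom φ x) =
      a.map φ * C (b.eval₂ φ x) - C (a.eval₂ φ x) * b.map φ := by
  have hcomp : (eval₂RingHom φ x).comp C = φ := by ext; simp
  simp only [crossDifference, Polynomial.map_sub, Polynomial.map_mul, Polynomial.map_map, hcomp,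
    map_C, coe_eval₂RingHom]

lemma evalEval_crossDifference {R : Type*} [CommRing R] (a b : R[X]) (x y : R) :
    (crossDifference a b).evalEval x y = a.eval y * b.eval x - a.eval x * b.eval y := by
  rw [← map_evalRingHom_eval, evalRingHom, map_crossDifference]
  simp

lemma natDegree_coeff_crossDifference_le {R : Type*} [CommRing R] {a b : R[X]} {n : ℕ}
    (ha : a.natDegree ≤ n) (hb : b.natDegree ≤ n) (j : ℕ) :
    ((crossDifference a b).coeff j).natDegree ≤ n := by
  rw [coeff_crossDifference]
  exact (natDegree_sub_le _ _).trans
    (max_le ((natDegree_C_mul_le _ _).trans hb) ((natDegree_C_mul_le _ _).trans ha))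

lemma natDegree_crossDifference_le {R : Type*} [CommRing R] {a b : R[X]} {n : ℕ}
    (ha : a.natDegree ≤ n) (hb : b.natDegree ≤ n) : (crossDifference a b).natDegree ≤ n :=
  natDegree_le_iff_coeff_eq_zero.2 fun m hm => by
    rw [coeff_crossDifference, coeff_eq_zero_of_natDegree_lt (ha.trans_lt hm),
      coeff_eq_zero_of_natDegree_lt (hb.trans_lt hm), C_0, zero_mul, zero_mul, sub_zero]

lemma abs_coeff_crossDifference_le {a b : ℤ[X]} {c d : ℤ} (ha : ∀ i, |a.coeff i| ≤ c)
    (hb : ∀ i, |b.coeff i| ≤ d) (j i : ℕ) :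
    |((crossDifference a b).coeff j).coeff i| ≤ 2 * (c * d) := by
  have hc : 0 ≤ c := (abs_nonneg _).trans (ha 0)
  have hmul (m n : ℕ) : |a.coeff m * b.coeff n| ≤ c * d := by
    rw [abs_mul]
    exact mul_le_mul (ha m) (hb n) (abs_nonneg _) hc
  rw [coeff_crossDifference, coeff_sub, coeff_C_mul, coeff_C_mul, mul_comm (b.coeff j), two_mul]
  exact (abs_sub _ _).trans (add_le_add (hmul j i) (hmul i j))

end CrossDifference

section AdjacencyPolynomial

/-- The coefficients of `adjacencyPolynomial`: the `j`-th list holds those of the powers of `X` in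
the coefficient of `Y ^ j`. -/
def adjacencyCoeffs : List (List ℤ) :=
  [[9765625000, -57617187500, 144580078125, -195507812500, 138417968750, -10234375000,
    -86818359375, 98968750000, -53390625000, 5546875000, 15375781250, -13721875000, 5389062500,
    -200000000, -879218750, 398750000, -26250000, -32187500, 7390625, 1187500, -281250, -125000,
    28125],
   [-57617187500, 289062500000, -595507812500, 600390625000, -181523437500, -288906250000,
    433960937500, -263343750000, 28859375000, 86175000000, -78371875000, 30087500000, 1246875000,
    -7815000000, 3925625000, -561250000, -242187500, 91500000, 7687500, -3125000, -3437500,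
    1450000, -162500],
   [144580078125, -595507812500, 915703125000, -444335937500, -495779296875, 935890625000,
    -598246093750, 17343750000, 281069531250, -235134375000, 75015625000, 19096875000,
    -30737343750, 13495000000, -1742812500, -681250000, 50140625, 178687500, -12500000, -54437500,
    26790625, -5125000, 356250],
   [-195507812500, 600390625000, -444335937500, -587812500000, 1348210937500, -940328125000,
    -26304687500, 569562500000, -472984375000, 135481250000, 63159375000, -72052500000,
    22828125000, 808750000, -653125000, -2402500000, 1798187500, -147875000, -421437500,
    247400000, -61062500, 6575000, -187500],
   [138417968750, -181523437500, -495779296875, 1348210937500, -1103507812500, -16984375000,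
    746017578125, -638243750000, 185182812500, 91509375000, -97016718750, 17898125000, 8812500000,
    5015000000, -13169093750, 7687250000, -506531250, -1930437500, 1236965625, -336762500,
    31562500, 3275000, -654375],
   [-10234375000, -288906250000, 935890625000, -940328125000, -16984375000, 772087500000,
    -641434375000, 153931250000, 99406250000, -67597500000, -17953750000, 15000000000,
    29471250000, -39872500000, 18661250000, 1051750000, -6617875000, 3943950000, -926875000,
    -73675000, 92725000, -19440000, 1365000],
   [-86818359375, 433960937500, -598246093750, -26304687500, 746017578125, -641434375000,
    107795312500, 131818750000, -47538593750, -53224375000, 15548437500, 72794375000,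
    -84866343750, 32134500000, 10822000000, -19166250000, 10085003125, -1644062500, -1012393750,
    690012500, -176144375, 20055000, -722500],
   [98968750000, -263343750000, 17343750000, 569562500000, -638243750000, 153931250000,
    131818750000, -57220000000, -40267500000, -7572500000, 116857500000, -135985000000,
    51047500000, 27929500000, -43206500000, 22615200000, -3246050000, -3379750000, 2477950000,
    -732700000, 88890000, 1330000, -890000],
   [-53390625000, 28859375000, 281069531250, -472984375000, 185182812500, 99406250000,
    -47538593750, -40267500000, -30340000000, 149451250000, -172315687500, 72249750000,
    40231875000, -70716000000, 39893612500, -5982700000, -7134275000, 5726375000, -1771663750,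
    101385000, 85372500, -22530000, 1753250],
   [5546875000, 86175000000, -235134375000, 135481250000, 91509375000, -67597500000, -53224375000,
    -7572500000, 149451250000, -184728000000, 81687750000, 51416000000, -96409750000, 56497600000,
    -6518650000, -13940700000, 11231475000, -3455400000, -222975000, 525550000, -167305000,
    22636000, -1071000],
   [15375781250, -78371875000, 75015625000, 63159375000, -97016718750, -17953750000, 15548437500,
    116857500000, -172315687500, 81687750000, 59449000000, -120323750000, 75271662500,
    -6450600000, -23981175000, 19755100000, -6570353750, -676555000, 1540675000, -606065000,
    104940250, -5866000, -266500],
   [-13721875000, 30087500000, 19096875000, -72052500000, 17898125000, 15000000000, 72794375000,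
    -135985000000, 72249750000, 51416000000, -120323750000, 86652800000, -10351450000,
    -31076200000, 27938450000, -10232600000, -942915000, 2922100000, -1360645000, 252436000,
    5773000, -9176000, 999000],
   [5389062500, 1246875000, -30737343750, 22828125000, 8812500000, 29471250000, -84866343750,
    51047500000, 40231875000, -96409750000, 75271662500, -10351450000, -32652550000, 31785200000,
    -12146827500, -1636260000, 4523642500, -2321565000, 413933250, 97253000, -63594000, 12070000,
    -803950],
   [-200000000, -7815000000, 13495000000, 808750000, 5015000000, -39872500000, 32134500000,
    27929500000, -70716000000, 56497600000, -6450600000, -31076200000, 31785200000, -12483120000,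
    -2523040000, 6095220000, -3403680000, 621064000, 281808000, -205942000, 54264000, -6392800,
    213600],
   [-879218750, 3925625000, -1742812500, -653125000, -13169093750, 18661250000, 10822000000,
    -43206500000, 39893612500, -6518650000, -23981175000, 27938450000, -12146827500, -2523040000,
    6770310000, -4204740000, 902778250, 446297000, -404768500, 132811000, -19207550, 156400,
    194800],
   [398750000, -561250000, -681250000, -2402500000, 7687250000, 1051750000, -19166250000,
    22615200000, -5982700000, -13940700000, 19755100000, -10232600000, -1636260000, 6095220000,
    -4204740000, 1055328000, 498286000, -554242000, 211622000, -29732000, -4954800, 2406000,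
    -254800],
   [-26250000, -242187500, 50140625, 1798187500, -506531250, -6617875000, 10085003125,
    -3246050000, -7134275000, 11231475000, -6570353750, -942915000, 4523642500, -3403680000,
    902778250, 498286000, -599805000, 250612500, -28032875, -19375700, 9864350, -1898600, 131345],
   [-32187500, 91500000, 178687500, -147875000, -1930437500, 3943950000, -1644062500, -3379750000,
    5726375000, -3455400000, -676555000, 2922100000, -2321565000, 621064000, 446297000,
    -554242000, 250612500, -23746400, -34004500, 20455000, -5437500, 664400, -21380],
   [7390625, 7687500, -12500000, -421437500, 1236965625, -926875000, -1012393750, 2477950000,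
    -1771663750, -222975000, 1540675000, -1360645000, 413933250, 281808000, -404768500, 211622000,
    -28032875, -34004500, 25567800, -8505500, 1289205, -4840, -13990],
   [1187500, -3125000, -54437500, 247400000, -336762500, -73675000, 690012500, -732700000,
    101385000, 525550000, -606065000, 252436000, 97253000, -205942000, 132811000, -29732000,
    -19375700, 20455000, -8505500, 1501600, 138620, -95000, 8500],
   [-281250, -3437500, 26790625, -61062500, 31562500, 92725000, -176144375, 88890000, 85372500,
    -167305000, 104940250, 5773000, -63594000, 54264000, -19207550, -4954800, 9864350, -5437500,
    1289205, 138620, -167460, 32280, -475],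
   [-125000, 1450000, -5125000, 6575000, 3275000, -19440000, 20055000, 1330000, -22530000,
    22636000, -5866000, -9176000, 12070000, -6392800, 156400, 2406000, -1898600, 664400, -4840,
    -95000, 32280, -1120, -840],
   [28125, -162500, 356250, -187500, -654375, 1365000, -722500, -890000, 1753250, -1071000,
    -266500, 999000, -803950, 213600, 194800, -254800, 131345, -21380, -13990, 8500, -475, -840,
    196]]

/-- The factor of degree `22` in `Y` of the cross difference of the Belyi map. For a root `x` of
`F`, its roots at `X = x` are the neighbours of `x` in the Higman-Sims graph on the roots of `F`. -/
noncomputable def adjacencyPolynomial : ℤ[X][X] := ofCoeffs₂ adjacencyCoeffs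

/-- The base `m` in which the coefficients of the quotient of the cross difference by the adjacency
polynomial are read off as digits. -/
abbrev kroneckerBase : ℕ := 2 ^ 256

/-- The value of a bivariate polynomial at `X = m` and `Y = m ^ 101`. -/
def kroneckerValue (A : List (List ℤ)) : ℤ :=
  listEval (kroneckerBase ^ 101 : ℤ) (A.map (listEval (kroneckerBase : ℤ)))

/-- The value of the cross difference of the Belyi map at `X = m` and `Y = m ^ 101`. -/
def crossValue : ℤ :=
  listEval (kroneckerBase ^ 101 : ℤ) pCoeffs * listEval (kroneckerBase : ℤ) qCoeffs -
    listEval (kroneckerBase : ℤ) pCoeffs * listEval (kroneckerBase ^ 101 : ℤ) qCoeffs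

/-- The cofactor of the adjacency polynomial in the cross difference of the Belyi map. Adding
`m / 2` to all of its coefficients makes them digits of a natural number in base `m`. -/
def quotientCoeffs : List (List ℤ) :=
  let shifted : ℕ := (crossValue / kroneckerValue adjacencyCoeffs +
    kroneckerValue (.replicate 79 (.replicate 79 (2 ^ 255)))).toNat
  (Nat.digits (kroneckerBase ^ 101) shifted).map fun d =>
    (Nat.digits kroneckerBase d).map fun (e : ℕ) => (e : ℤ) - 2 ^ 255

set_option maxRecDepth 4000 in
theorem adjacencyPolynomial_dvd_crossDifference :
    adjacencyPolynomial ∣ crossDifference (ofCoeffs pCoeffs) (ofCoeffs qCoeffs) := by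
  have heval : kroneckerValue adjacencyCoeffs * kroneckerValue quotientCoeffs = crossValue := by
    decide +kernel
  have hp : (ofCoeffs pCoeffs).natDegree ≤ 100 :=
    natDegree_ofCoeffs_le_of_length_le (by decide +kernel)
  have hq : (ofCoeffs qCoeffs).natDegree ≤ 100 :=
    natDegree_ofCoeffs_le_of_length_le (by decide +kernel)
  have hpc := abs_coeff_ofCoeffs_le (a := pCoeffs) (c := 2 ^ 105) (by norm_num) (by decide +kernel)
  have hqc := abs_coeff_ofCoeffs_le (a := qCoeffs) (c := 2 ^ 105) (by norm_num) (by decide +kernel)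
  refine ⟨ofCoeffs₂ quotientCoeffs, .symm <| ofCoeffs₂_mul_eq_of_evalEval_eq (r := 22) (s := 78)
    (m := kroneckerBase) (b := 2 ^ 180) (by decide +kernel) (by decide +kernel)
    (natDegree_coeff_crossDifference_le hp hq) (by norm_num) (by norm_num) (by decide +kernel)
    (abs_coeff_crossDifference_le hpc hqc) (by decide +kernel) ?_⟩
  rw [evalEval_crossDifference]
  simp only [eval_ofCoeffs]
  exact heval

end AdjacencyPolynomial

section FibreCertificates

variable {R : Type*} [CommRing R]

/-- Evaluation of integer polynomials at a point `x` of a commutative ring. -/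
noncomputable abbrev intEval (x : R) : ℤ[X] →+* R := eval₂RingHom (Int.castRingHom R) x

/-- The coefficients of the adjacency polynomial specialized at `X = x`. -/
def adjacencyCoeffsAt (x : R) : List R :=
  adjacencyCoeffs.map fun a => listEval x (a.map Int.cast)

/-- The coefficients of the cross difference of the Belyi map specialized at `X = x`. -/
def crossCoeffsAt (x : R) : List R :=
  listAdd (listSmul (listEval x (qCoeffs.map Int.cast)) (pCoeffs.map Int.cast))
    (listSmul (-listEval x (pCoeffs.map Int.cast)) (qCoeffs.map Int.cast))

lemma eval₂_ofCoeffs (x : R) (a : List ℤ) :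
    (ofCoeffs a).eval₂ (Int.castRingHom R) x = listEval x (a.map Int.cast) := by
  rw [← eval_map, map_ofCoeffs, eval_ofCoeffs]
  rfl

lemma map_adjacencyPolynomial (x : R) :
    adjacencyPolynomial.map (intEval x) = ofCoeffs (adjacencyCoeffsAt x) := by
  simp only [adjacencyPolynomial, map_ofCoeffs₂, coe_eval₂RingHom, eval₂_ofCoeffs,
    adjacencyCoeffsAt]

lemma map_crossDifference_ofCoeffs (x : R) :
    (crossDifference (ofCoeffs pCoeffs) (ofCoeffs qCoeffs)).map (intEval x) =
      ofCoeffs (crossCoeffsAt x) := by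
  simp only [map_crossDifference, map_ofCoeffs, eval₂_ofCoeffs, crossCoeffsAt, ofCoeffs_listAdd,
    ofCoeffs_listSmul, Int.coe_castRingHom, C_neg]
  ring

/-- The factorization of the cross difference of the Belyi map at `X = 1` modulo `11`. -/
def factorsOrderEleven : List (List (ZMod 11) × List (ℕ × List (ZMod 11))) :=
  [([1], []),
   ([2, 5, 4, 7, 4, 5, 0, 1, 8, 7, 3], [(1, [2, 1, 9, 9, 9, 10, 7, 2, 5, 7, 6])]),
   ([1, 10, 10, 9, 1, 7, 0, 0, 5, 7, 10], [(1, [7, 10, 6, 6, 3, 5, 1, 5, 5, 4, 1])]),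
   ([9, 6, 7, 4, 10, 4, 1, 7, 5, 10, 8], [(1, [2, 6, 7, 1, 2, 1, 7, 6, 4, 8, 3])]),
   ([3, 5, 5, 0, 6, 7, 3, 9, 6, 1, 10], [(1, [2, 3, 8, 5, 8, 2, 4, 2, 3, 0, 4])]),
   ([7, 9, 8, 10, 5, 2, 4, 8, 4, 8, 10], [(1, [7, 4, 7, 4, 1, 5, 4, 7, 9, 0, 5])]),
   ([2, 4, 4, 4, 9, 6, 5, 0, 1, 1, 3], [(1, [2, 9, 1, 8, 9, 10, 10, 9, 10, 7, 1])]),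
   ([7, 5, 9, 3, 5, 3, 1, 8, 4, 7, 7], [(1, [10, 10, 8, 4, 5, 0, 2, 3, 10, 5, 5])]),
   ([10, 10, 2, 0, 2, 6, 10, 3, 2, 6, 1], [(1, [2, 5, 8, 7, 10, 6, 2, 2, 2, 6, 6])]),
   ([4, 2, 8, 4, 7, 0, 10, 6, 9, 0, 10], [(1, [1, 4, 9, 3, 1, 3, 4, 8, 5, 4, 8])])]

/-- The factorization of the cross difference of the Belyi map at `X = 0` modulo `11`. -/
def factorsOrderSeven : List (List (ZMod 11) × List (ℕ × List (ZMod 11))) :=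
  [([10], []),
   ([0], []),
   ([3, 1, 2, 8, 8, 1, 10], [(1, [5, 5, 0, 1, 7, 3, 5])]),
   ([3, 4, 0, 4, 2, 0, 0], [(1, [2, 0, 9, 5, 3, 2, 10])]),
   ([6, 8, 4, 3, 7, 6, 2], [(1, [0, 10, 0, 8, 0, 1, 3])]),
   ([1, 9, 1, 6, 8, 7, 3], [(1, [9, 1, 3, 5, 3, 1, 2])]),
   ([1, 4, 5, 0, 10, 0, 5], [(1, [6, 10, 9, 5, 1, 7, 5])]),
   ([10, 2, 7, 6, 1, 7, 9], [(1, [4, 1, 10, 1, 10, 9, 2])]),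
   ([3, 7, 8, 8, 10, 1, 9], [(1, [3, 7, 2, 6, 10, 4, 7])]),
   ([2, 0, 6, 2, 10, 2, 4], [(1, [0, 7, 0, 2, 6, 0, 8])]),
   ([2, 9, 9, 7, 9, 7, 5], [(1, [5, 3, 5, 2, 2, 8, 1])]),
   ([3, 0, 9, 7, 4, 9, 1], [(1, [4, 1, 4, 7, 5, 8, 9])]),
   ([2, 4, 1, 0, 2, 4, 8], [(1, [9, 5, 6, 9, 0, 6, 7])]),
   ([5, 7, 4, 8, 9, 3, 2], [(1, [5, 4, 8, 5, 2, 3, 10])]),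
   ([4, 0, 5, 4, 7, 3, 8], [(1, [6, 7, 3, 5, 9, 9, 5])]),
   ([4, 8, 10, 1, 4, 3, 2], [(1, [7, 6, 1, 7, 8, 10, 5])])]

/-- The factorization of the adjacency polynomial at `X = 1` modulo `13`. -/
def factorsOrderFive : List (List (ZMod 13) × List (ℕ × List (ZMod 13))) :=
  [([5], []),
   ([4], []),
   ([8, 2, 8, 4, 10], [(1, [4, 7, 9, 6, 1])]),
   ([11, 3, 5, 3, 11], [(1, [2, 11, 2, 9, 10])]),
   ([5, 9, 6, 8, 6], [(1, [5, 4, 0, 9, 3])]),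
   ([11, 2, 1, 12, 10], [(1, [5, 2, 11, 4, 7])])]

/-- The factorization of the adjacency polynomial at `X = 1` modulo `37`. -/
def factorsOrderEight : List (List (ZMod 37) × List (ℕ × List (ZMod 37))) :=
  [([21], []),
   ([28], []),
   ([17, 36, 27, 29], [(2, [22, 18, 36, 3])]),
   ([14, 16, 29, 16, 12, 2, 30, 29], [(4, [19, 28, 32, 0, 19, 13, 2, 21])]),
   ([21, 16, 3, 25, 28, 12, 1, 24], [(4, [28, 21, 5, 20, 6, 27, 15, 3])])]

/-- The factorization of the adjacency polynomial at `X = 12` modulo `43`. -/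
def factorsOrderSix : List (List (ZMod 43) × List (ℕ × List (ZMod 43))) :=
  [([25], []),
   ([19], []),
   ([15, 3], [(3, [15, 33])]),
   ([15, 37, 36], [(2, [36, 7, 36])]),
   ([5, 35, 42], [(2, [10, 32, 8])]),
   ([1, 1, 21, 42, 38, 20], [(2, [40, 31, 11, 19, 1, 25]), (3, [17, 24, 30, 42, 25, 18])]),
   ([4, 41, 23, 9, 23, 7], [(2, [25, 0, 28, 30, 24, 3]), (3, [41, 31, 9, 30, 28, 4])])]

lemma isFactorizationCertificate_orderEleven :
    IsFactorizationCertificate 11 (crossCoeffsAt 1) 2 factorsOrderEleven := by decide +kernel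

lemma isFactorizationCertificate_orderSeven :
    IsFactorizationCertificate 11 (crossCoeffsAt 0) 5 factorsOrderSeven := by decide +kernel

lemma isFactorizationCertificate_orderFive :
    IsFactorizationCertificate 13 (adjacencyCoeffsAt 1) 9 factorsOrderFive := by decide +kernel

lemma isFactorizationCertificate_orderEight :
    IsFactorizationCertificate 37 (adjacencyCoeffsAt 1) 34 factorsOrderEight := by decide +kernel

lemma isFactorizationCertificate_orderSix :
    IsFactorizationCertificate 43 (adjacencyCoeffsAt 12) 21 factorsOrderSix := by decide +kernel

end FibreCertificates

section CycleLengths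

variable {G X : Type*} [Group G] [MulAction G X]

/-- The permutation induced by `s` on a finite invariant set `S` has cycles of the lengths in `l`,
expressed by the number of fixed points of all powers of `s`. -/
def HasCycleLengthsOn (s : G) (S : Set X) (l : List ℕ) : Prop :=
  ∀ d, {y ∈ S | s ^ d • y = y}.ncard = (l.filter (· ∣ d)).sum

lemma HasCycleLengthsOn.ncard_eq {s : G} {S : Set X} {l : List ℕ} (h : HasCycleLengthsOn s S l) :
    S.ncard = l.sum := by
  simpa using h 0

lemma HasCycleLengthsOn.pow_smul_eq [Finite X] {s : G} {S : Set X} {l : List ℕ}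
    (h : HasCycleLengthsOn s S l) {d : ℕ} (hd : ∀ c ∈ l, c ∣ d) {y : X} (hy : y ∈ S) :
    s ^ d • y = y := by
  have hcard : {y ∈ S | s ^ d • y = y}.ncard = S.ncard := by
    rw [h d, h.ncard_eq, List.filter_eq_self.2 (by simpa using hd)]
  have heq := Set.eq_of_subset_of_ncard_le (Set.sep_subset S fun y => s ^ d • y = y) hcard.ge
  exact (heq.ge hy).2

lemma HasCycleLengthsOn.ncard_fixed_pow {s : G} {l : List ℕ}
    (h : HasCycleLengthsOn s (Set.univ : Set X) l) (d : ℕ) :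
    {y : X | s ^ d • y = y}.ncard = (l.filter (· ∣ d)).sum := by
  simpa using h d

lemma HasCycleLengthsOn.ncard_fixed {s : G} {l : List ℕ}
    (h : HasCycleLengthsOn s (Set.univ : Set X) l) : {y : X | s • y = y}.ncard = l.count 1 := by
  simpa [List.filter_eq] using h 1

lemma HasCycleLengthsOn.pow_eq_one [Finite X] [FaithfulSMul G X] {s : G} {l : List ℕ}
    (h : HasCycleLengthsOn s (Set.univ : Set X) l) {d : ℕ} (hd : ∀ c ∈ l, c ∣ d) : s ^ d = 1 :=
  eq_of_smul_eq_smul fun y : X => (h.pow_smul_eq hd (Set.mem_univ y)).trans (one_smul G y).symm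

/-- The permutation induced by `s` on a finite set `S` that it maps into itself. -/
noncomputable def permOn [Finite X] (s : G) {S : Set X} (hS : ∀ y ∈ S, s • y ∈ S) :
    Equiv.Perm S :=
  (MulAction.toPerm s).subtypePermOfFintype hS

lemma coe_permOn_pow [Finite X] {s : G} {S : Set X} (hS : ∀ y ∈ S, s • y ∈ S) (m : ℕ) (y : S) :
    ((permOn s hS ^ m) y : X) = s ^ m • (y : X) := by
  induction m generalizing y with
  | zero => rw [pow_zero, pow_zero, one_smul, Equiv.Perm.one_apply]
  | succ m ih => rw [pow_succ, pow_succ, mul_smul]; exact ih (permOn s hS y)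

lemma ncard_modEq_ncard_fixed [Finite X] {p n : ℕ} [Fact p.Prime] {s : G} {S : Set X}
    (hS : ∀ y ∈ S, s • y ∈ S) (hs : ∀ y ∈ S, s ^ p ^ n • y = y) :
    S.ncard ≡ {y ∈ S | s • y = y}.ncard [MOD p] := by
  classical
  have := Fintype.ofFinite S
  have hone : permOn s hS ^ p ^ n = 1 :=
    Equiv.ext fun y => Subtype.ext ((coe_permOn_pow hS _ y).trans (hs y y.2))
  let f : Function.End S := MulAction.toEndHom (permOn s hS)
  have hf : f ^ p ^ n = 1 := by rw [← map_pow, hone, map_one]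
  have hfixed : {y ∈ S | s • y = y} = Subtype.val '' f.fixedPoints := by
    ext y
    constructor
    · rintro ⟨hy, hsy⟩
      exact ⟨⟨y, hy⟩, Subtype.ext hsy, rfl⟩
    · rintro ⟨y, hy, rfl⟩
      exact ⟨y.2, congrArg Subtype.val hy⟩
  have hmod := Equiv.Perm.card_fixedPoints_modEq hf
  rwa [Fintype.card_eq_nat_card, Fintype.card_eq_nat_card, Nat.card_coe_set_eq,
    Nat.card_coe_set_eq, ← Set.ncard_image_of_injective _ Subtype.val_injective, ← hfixed] at hmod

lemma pow_succ_dvd_card_of_perm {α : Type*} [Fintype α] {p k n : ℕ} (hp : p.Prime)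
    {σ : Equiv.Perm α} (hσ : σ ^ p ^ n = 1) (hfree : ∀ y, (σ ^ p ^ k) y ≠ y) :
    p ^ (k + 1) ∣ Fintype.card α := by
  classical
  have hsupport : σ.support = Finset.univ := by
    refine Finset.eq_univ_of_forall fun y => Equiv.Perm.mem_support.2 fun hy => hfree y ?_
    exact Function.IsFixedPt.perm_pow hy _
  rw [← Finset.card_univ, ← hsupport, ← Equiv.Perm.sum_cycleType]
  refine Multiset.dvd_sum fun m hm => ?_
  rw [Equiv.Perm.cycleType_def, Multiset.mem_map] at hm
  obtain ⟨c, hc, rfl⟩ := hm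
  have hcycle := (Equiv.Perm.mem_cycleFactorsFinset_iff.1 hc).1
  obtain ⟨y, hy⟩ := hcycle.nonempty_support
  obtain ⟨j, -, hj⟩ := (Nat.dvd_prime_pow hp).1 <| (Equiv.Perm.dvd_of_mem_cycleType
    (Equiv.Perm.cycleType_def σ ▸ Multiset.mem_map_of_mem _ hc)).trans
    (orderOf_dvd_of_pow_eq_one hσ)
  rw [Function.comp_apply] at hj
  rw [Function.comp_apply, hj]
  refine pow_dvd_pow p (Nat.lt_of_not_le fun hjk => hfree y ?_)
  have hpow : c ^ p ^ k = 1 := by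
    rw [← orderOf_dvd_iff_pow_eq_one, hcycle.orderOf, hj]
    exact pow_dvd_pow p hjk
  rw [← Equiv.Perm.cycleOf_pow_apply_self, ← Equiv.Perm.cycle_is_cycleOf hy hc, hpow,
    Equiv.Perm.one_apply]

lemma pow_succ_dvd_ncard [Finite X] {p k n : ℕ} (hp : p.Prime) {s : G} {S : Set X}
    (hS : ∀ y ∈ S, s • y ∈ S) (hs : ∀ y ∈ S, s ^ p ^ n • y = y)
    (hfree : ∀ y ∈ S, s ^ p ^ k • y ≠ y) : p ^ (k + 1) ∣ S.ncard := by
  classical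
  have := Fintype.ofFinite S
  rw [← Nat.card_coe_set_eq, Nat.card_eq_fintype_card]
  refine pow_succ_dvd_card_of_perm hp (n := n) (σ := permOn s hS)
    (Equiv.ext fun y => Subtype.ext ((coe_permOn_pow hS _ y).trans (hs y y.2))) fun y hy => ?_
  exact hfree y y.2 ((coe_permOn_pow hS _ y).symm.trans (congrArg Subtype.val hy))

lemma pow_smul_eq_of_ncard_lt [Finite X] {p k : ℕ} (hp : p.Prime) {s : G} {S : Set X}
    (hS : ∀ y ∈ S, s • y ∈ S) (hs : ∀ y ∈ S, s ^ p ^ (k + 1) • y = y)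
    (hcard : S.ncard < p ^ (k + 1)) {y : X} (hy : y ∈ S) : s ^ p ^ k • y = y := by
  by_contra hne
  have hdvd : p ^ (k + 1) ∣ {z ∈ S | s ^ p ^ k • z ≠ z}.ncard := by
    refine pow_succ_dvd_ncard hp (n := k + 1) (s := s) ?_ (fun z hz => hs z hz.1) fun z hz => hz.2
    rintro z ⟨hzS, hz⟩
    refine ⟨hS z hzS, fun hsz => hz (smul_left_cancel s ?_)⟩
    rwa [← mul_smul, ← pow_succ', pow_succ, mul_smul]
  have hpos : 0 < {z ∈ S | s ^ p ^ k • z ≠ z}.ncard := (Set.ncard_pos).2 ⟨y, hy, hne⟩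
  exact hcard.not_ge ((Nat.le_of_dvd hpos hdvd).trans (Set.ncard_le_ncard (Set.sep_subset _ _)))

lemma exists_smul_eq_self [Fintype X] {p n : ℕ} [Fact p.Prime] {s : G} (hs : s ^ p ^ n = 1)
    (hcard : ¬p ∣ Fintype.card X) : ∃ y : X, s • y = y :=
  Equiv.Perm.exists_fixed_point_of_prime (n := n) (σ := MulAction.toPermHom G X s) hcard
    (by rw [← map_pow, hs, map_one])

lemma card_dvd_card_of_stabilizer_eq_bot (h : ∀ y : X, MulAction.stabilizer G y = ⊥) :
    Nat.card G ∣ Nat.card X := by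
  rw [Nat.card_congr (MulAction.selfEquivOrbitsQuotientProd h), Nat.card_prod]
  exact Dvd.intro_left _ rfl

end CycleLengths

section MultipleTransitivity

variable {H P : Type*} [Group H] [MulAction H P]

lemma isMultiplyPretransitive_succ [Finite P] {n : ℕ} [MulAction.IsMultiplyPretransitive H P n]
    (a : Fin n ↪ P)
    (h : ∀ S : Set P, S.Nonempty → Disjoint S (Set.range a) →
      (∀ g : H, g • a = a → ∀ y ∈ S, g • y ∈ S) → Nat.card P ≤ S.ncard + n) :
    MulAction.IsMultiplyPretransitive H P (n + 1) where
  exists_smul_eq x y := by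
    obtain ⟨g₁, hg₁⟩ := MulAction.exists_smul_eq H (Fin.castSuccEmb.trans x) a
    obtain ⟨g₂, hg₂⟩ := MulAction.exists_smul_eq H (Fin.castSuccEmb.trans y) a
    have hnotMem (z : Fin (n + 1) ↪ P) (g : H) (hg : g • Fin.castSuccEmb.trans z = a) :
        g • z (Fin.last n) ∉ Set.range a := by
      rintro ⟨i, hi⟩
      rw [← hg] at hi
      exact (Fin.castSucc_lt_last i).ne (z.injective (MulAction.injective g hi))
    let S : Set P := {z | ∃ g : H, g • a = a ∧ g • g₁ • x (Fin.last n) = z}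
    have hdisjoint : Disjoint S (Set.range a) := by
      rw [Set.disjoint_left]
      rintro _ ⟨g, hg, rfl⟩
      rw [← mul_smul]
      exact hnotMem x (g * g₁) (by rw [mul_smul, hg₁, hg])
    have hcard := h S ⟨_, 1, one_smul _ _, rfl⟩ hdisjoint <| by
      rintro g hg _ ⟨g', hg', rfl⟩
      exact ⟨g * g', by rw [mul_smul, hg', hg], mul_smul _ _ _⟩
    have hunion : S ∪ Set.range a = Set.univ := by
      refine Set.eq_of_subset_of_ncard_le (Set.subset_univ _) ?_
      rw [Set.ncard_univ, Set.ncard_union_eq hdisjoint, ← Nat.card_coe_set_eq (Set.range a),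
        Nat.card_range_of_injective a.injective, Nat.card_fin]
      exact hcard
    obtain ⟨g, hg, hlast⟩ : g₂ • y (Fin.last n) ∈ S :=
      (hunion.ge (Set.mem_univ _)).resolve_right (hnotMem y g₂ hg₂)
    refine ⟨g₂⁻¹ * g * g₁, Function.Embedding.ext fun i => ?_⟩
    rw [Function.Embedding.smul_apply, mul_smul, mul_smul, inv_smul_eq_iff]
    induction i using Fin.lastCases with
    | last => exact hlast
    | cast i => exact DFunLike.congr_fun ((congrArg (g • ·) hg₁).trans (hg.trans hg₂.symm)) i

lemma isPretransitive_of_forall_card_le [Finite P]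
    (h : ∀ S : Set P, S.Nonempty → (∀ (g : H), ∀ y ∈ S, g • y ∈ S) → Nat.card P ≤ S.ncard) :
    MulAction.IsPretransitive H P := by
  rw [← MulAction.is_one_pretransitive_iff (G := H)]
  exact isMultiplyPretransitive_succ (n := 0) default fun S hS _ hinv =>
    h S hS fun g => hinv g (Subsingleton.elim _ _)

open scoped Pointwise in
lemma exists_smul_finset_eq [DecidableEq P] {t : ℕ} [MulAction.IsMultiplyPretransitive H P t]
    {T T' : Finset P} (hT : T.card = t) (hT' : T'.card = t) : ∃ g : H, g • T = T' := by
  have := Set.powersetCard.isPretransitive_of_isMultiplyPretransitive H (α := P) (n := t)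
    inferInstance
  obtain ⟨g, hg⟩ := MulAction.exists_smul_eq H
    (⟨T, hT⟩ : Set.powersetCard P t) (⟨T', hT'⟩ : Set.powersetCard P t)
  exact ⟨g, congrArg Subtype.val hg⟩

end MultipleTransitivity

section TransitivityCriteria

variable {H P : Type*} [Group H] [MulAction H P]

lemma ncard_fixed_conj (g s : H) :
    {y : P | (g * s * g⁻¹) • y = y}.ncard = {y : P | s • y = y}.ncard := by
  rw [← Set.ncard_image_of_injective {y : P | s • y = y} (MulAction.injective g)]
  congr 1
  ext y
  rw [Set.image_smul, Set.mem_smul_set_iff_inv_smul_mem]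
  change (g * s * g⁻¹) • y = y ↔ s • g⁻¹ • y = g⁻¹ • y
  rw [mul_smul, mul_smul, eq_inv_smul_iff]

lemma conj_pow_smul_eq {g s : H} {n : ℕ} (hs : ∀ y : P, s ^ n • y = y) (y : P) :
    (g * s * g⁻¹) ^ n • y = y := by
  rw [conj_pow, mul_smul, mul_smul, hs, smul_inv_smul]

lemma exists_embedding_smul_eq [Finite P] {s : H} {n : ℕ} (hs : {y : P | s • y = y}.ncard = n) :
    ∃ a : Fin n ↪ P, s • a = a := by
  let e := Finite.equivFinOfCardEq ((Nat.card_coe_set_eq _).trans hs)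
  exact ⟨e.symm.toEmbedding.trans (.subtype _), Function.Embedding.ext fun i => (e.symm i).2⟩

lemma ncard_fixed_add_le [Finite P] {s : H} {n : ℕ} {a : Fin n ↪ P} (ha : s • a = a) {S : Set P}
    (hdisjoint : Disjoint S (Set.range a)) :
    {y ∈ S | s • y = y}.ncard + n ≤ {y : P | s • y = y}.ncard := by
  have hn : (Set.range a).ncard = n := by
    rw [← Nat.card_coe_set_eq, Nat.card_range_of_injective a.injective, Nat.card_fin]
  conv_lhs => rw [← hn]
  rw [← Set.ncard_union_eq (hdisjoint.mono_left (Set.sep_subset _ _))]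
  refine Set.ncard_le_ncard (Set.union_subset (fun y hy => hy.2) ?_)
  rintro _ ⟨i, rfl⟩
  exact DFunLike.congr_fun ha i

lemma exists_ncard_modEq [Finite P] {p n : ℕ} [Fact p.Prime] {s : H}
    (hs : ∀ y : P, s ^ p • y = y) {a : Fin n ↪ P} (ha : s • a = a) {S : Set P}
    (hdisjoint : Disjoint S (Set.range a)) (hS : ∀ y ∈ S, s • y ∈ S) :
    ∃ m, m + n ≤ {y : P | s • y = y}.ncard ∧ S.ncard ≡ m [MOD p] :=
  ⟨_, ncard_fixed_add_le ha hdisjoint,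
    ncard_modEq_ncard_fixed (n := 1) hS fun y _ => by rw [pow_one, hs]⟩

lemma isPretransitive_of_card_eq_22 [Finite P] (hP : Nat.card P = 22) {v u : H}
    (hv : ∀ y : P, v ^ 11 • y = y) (hvfix : {y : P | v • y = y}.ncard = 0)
    (hu : ∀ y : P, u ^ 7 • y = y) (hufix : {y : P | u • y = y}.ncard = 1) :
    MulAction.IsPretransitive H P := by
  have : Fact (Nat.Prime 11) := ⟨by norm_num⟩
  have : Fact (Nat.Prime 7) := ⟨by norm_num⟩
  refine isPretransitive_of_forall_card_le (H := H) fun S hne hinv => ?_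
  have hpos : 0 < S.ncard := (Set.ncard_pos).2 hne
  have hle : S.ncard ≤ 22 := hP ▸ Set.ncard_le_card S
  obtain ⟨m, hm, hmod11⟩ := exists_ncard_modEq (a := (default : Fin 0 ↪ P)) hv
    (Subsingleton.elim _ _) (by simp) (hinv v)
  obtain ⟨n, hn, hmod7⟩ := exists_ncard_modEq (a := (default : Fin 0 ↪ P)) hu
    (Subsingleton.elim _ _) (by simp) (hinv u)
  rw [Nat.ModEq] at hmod11 hmod7
  omega

lemma isMultiplyPretransitive_two_of_card_eq_22 [Finite P] [MulAction.IsPretransitive H P]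
    (hP : Nat.card P = 22) {u r : H} (hu : ∀ y : P, u ^ 7 • y = y)
    (hufix : {y : P | u • y = y}.ncard = 1) (hr : ∀ y : P, r ^ 5 • y = y)
    (hrfix : {y : P | r • y = y}.ncard = 2) :
    MulAction.IsMultiplyPretransitive H P 2 := by
  have : Fact (Nat.Prime 7) := ⟨by norm_num⟩
  have : Fact (Nat.Prime 5) := ⟨by norm_num⟩
  have hone : MulAction.IsMultiplyPretransitive H P 1 := MulAction.is_one_pretransitive_iff.2 ‹_›
  obtain ⟨a, ha⟩ := exists_embedding_smul_eq hufix
  obtain ⟨b, hb⟩ := exists_embedding_smul_eq hrfix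
  obtain ⟨g, rfl⟩ := MulAction.exists_smul_eq H ((Fin.castLEEmb one_le_two).trans b) a
  have hrb : r • (Fin.castLEEmb one_le_two).trans b = (Fin.castLEEmb one_le_two).trans b :=
    Function.Embedding.ext fun i => DFunLike.congr_fun hb _
  have hconj : (g * r * g⁻¹) • g • (Fin.castLEEmb one_le_two).trans b =
      g • (Fin.castLEEmb one_le_two).trans b := by
    rw [mul_smul, mul_smul, inv_smul_smul, hrb]
  refine isMultiplyPretransitive_succ (g • (Fin.castLEEmb one_le_two).trans b)
    fun S hne hdisjoint hinv => ?_
  have hpos : 0 < S.ncard := (Set.ncard_pos).2 hne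
  have hle : S.ncard ≤ 22 := hP ▸ Set.ncard_le_card S
  obtain ⟨m, hm, hmod7⟩ := exists_ncard_modEq hu ha hdisjoint (hinv u ha)
  obtain ⟨n, hn, hmod5⟩ := exists_ncard_modEq (p := 5) (s := g * r * g⁻¹)
    (conj_pow_smul_eq hr) hconj hdisjoint (hinv _ hconj)
  rw [ncard_fixed_conj, hrfix] at hn
  rw [Nat.ModEq] at hmod7 hmod5
  obtain rfl | rfl : n = 0 ∨ n = 1 := by omega
  all_goals omega

lemma isMultiplyPretransitive_three_of_card_eq_22 [Finite P]
    [MulAction.IsMultiplyPretransitive H P 2] (hP : Nat.card P = 22) {r s : H}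
    (hr : ∀ y : P, r ^ 5 • y = y) (hrfix : {y : P | r • y = y}.ncard = 2)
    (hs : ∀ y : P, s ^ 8 • y = y) (hsfix : {y : P | s • y = y}.ncard = 2)
    (hsfix2 : {y : P | s ^ 2 • y = y}.ncard = 2) :
    MulAction.IsMultiplyPretransitive H P 3 := by
  have : Fact (Nat.Prime 5) := ⟨by norm_num⟩
  obtain ⟨a, ha⟩ := exists_embedding_smul_eq hrfix
  obtain ⟨b, hb⟩ := exists_embedding_smul_eq hsfix
  obtain ⟨g, rfl⟩ := MulAction.exists_smul_eq H b a
  have hconj : (g * s * g⁻¹) • g • b = g • b := by rw [mul_smul, mul_smul, inv_smul_smul, hb]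
  refine isMultiplyPretransitive_succ (g • b) fun S hne hdisjoint hinv => ?_
  have hpos : 0 < S.ncard := (Set.ncard_pos).2 hne
  obtain ⟨m, hm, hmod⟩ := exists_ncard_modEq hr ha hdisjoint (hinv r ha)
  have hfree : {y ∈ S | (g * s * g⁻¹) ^ 2 • y = y}.ncard + 2 ≤ 2 := by
    have hle := ncard_fixed_add_le (s := (g * s * g⁻¹) ^ 2)
      (by rw [pow_two, mul_smul, hconj, hconj]) hdisjoint
    nth_rewrite 2 [conj_pow] at hle
    rwa [ncard_fixed_conj, hsfix2] at hle
  have hfour : 2 ^ (1 + 1) ∣ S.ncard := by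
    refine pow_succ_dvd_ncard Nat.prime_two (n := 3) (s := g * s * g⁻¹) (hinv _ hconj)
      (fun y _ => conj_pow_smul_eq hs y) fun y hy hfix => ?_
    have : 0 < {y ∈ S | (g * s * g⁻¹) ^ 2 • y = y}.ncard := (Set.ncard_pos).2 ⟨y, hy, hfix⟩
    omega
  rw [Nat.ModEq] at hmod
  omega

lemma isPretransitive_of_card_eq_77 [Finite P] (hP : Nat.card P = 77) {v u : H}
    (hv : ∀ y : P, v ^ 11 • y = y) (hvfix : {y : P | v • y = y}.ncard = 0)
    (hu : ∀ y : P, u ^ 7 • y = y) (hufix : {y : P | u • y = y}.ncard = 0) :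
    MulAction.IsPretransitive H P := by
  have : Fact (Nat.Prime 11) := ⟨by norm_num⟩
  have : Fact (Nat.Prime 7) := ⟨by norm_num⟩
  refine isPretransitive_of_forall_card_le (H := H) fun S hne hinv => ?_
  have hpos : 0 < S.ncard := (Set.ncard_pos).2 hne
  obtain ⟨m, hm, hmod11⟩ := exists_ncard_modEq (a := (default : Fin 0 ↪ P)) hv
    (Subsingleton.elim _ _) (by simp) (hinv v)
  obtain ⟨n, hn, hmod7⟩ := exists_ncard_modEq (a := (default : Fin 0 ↪ P)) hu
    (Subsingleton.elim _ _) (by simp) (hinv u)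
  rw [Nat.ModEq] at hmod11 hmod7
  omega

end TransitivityCriteria

section SteinerSystems

variable {P W : Type*}

/-- A Steiner system `S(t, k, v)` on the points `P`, presented by an indexed family of blocks:
all blocks have `k` points and every set of `t` points lies in exactly one block. -/
structure IsSteinerSystem (t k : ℕ) (block : W → Finset P) : Prop where
  card_block (w : W) : (block w).card = k
  existsUnique (T : Finset P) (hT : T.card = t) : ∃! w, T ⊆ block w

lemma card_mul_choose_eq [Fintype P] [Fintype W] {t k μ : ℕ} {block : W → Finset P}
    (hk : ∀ w, (block w).card = k)
    (hμ : ∀ T : Finset P, T.card = t → {w | T ⊆ block w}.ncard = μ) :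
    Fintype.card W * k.choose t = (Fintype.card P).choose t * μ := by
  classical
  have hcount := Finset.sum_card_bipartiteAbove_eq_sum_card_bipartiteBelow
    (s := Finset.univ) (t := Finset.univ.powersetCard t) fun (w : W) T => T ⊆ block w
  have habove (w : W) : ((Finset.univ.powersetCard t).bipartiteAbove
      (fun (w : W) T => T ⊆ block w) w).card = k.choose t := by
    rw [← hk w, ← Finset.card_powersetCard]
    congr 1
    ext T
    simp [Finset.mem_powersetCard, and_comm]
  have hbelow (T) (hT : T ∈ (Finset.univ : Finset P).powersetCard t) :
      (Finset.univ.bipartiteBelow (fun (w : W) T => T ⊆ block w) T).card = μ := by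
    rw [← hμ T (Finset.mem_powersetCard.1 hT).2, ← Set.ncard_coe_finset]
    simp
  rw [Finset.sum_congr rfl fun w _ => habove w, Finset.sum_congr rfl hbelow] at hcount
  simpa using hcount

namespace IsSteinerSystem

variable {k : ℕ} {block : W → Finset P}

lemma eq_of_mem {a b c : P} (h : IsSteinerSystem 3 k block) (hab : a ≠ b) (hac : a ≠ c)
    (hbc : b ≠ c) {w w' : W} (ha : a ∈ block w) (hb : b ∈ block w) (hc : c ∈ block w)
    (ha' : a ∈ block w') (hb' : b ∈ block w') (hc' : c ∈ block w') : w = w' := by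
  classical
  exact (h.existsUnique {a, b, c} (Finset.card_eq_three.2 ⟨a, b, c, hab, hac, hbc, rfl⟩)).unique
    (by simp [Finset.insert_subset_iff, *]) (by simp [Finset.insert_subset_iff, *])

lemma exists_mem {a b c : P} (h : IsSteinerSystem 3 k block) (hab : a ≠ b) (hac : a ≠ c)
    (hbc : b ≠ c) : ∃ w, a ∈ block w ∧ b ∈ block w ∧ c ∈ block w := by
  classical
  obtain ⟨w, hw, -⟩ := h.existsUnique {a, b, c}
    (Finset.card_eq_three.2 ⟨a, b, c, hab, hac, hbc, rfl⟩)
  exact ⟨w, hw (by simp), hw (by simp), hw (by simp)⟩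

lemma pairwiseDisjoint_blocks_through [DecidableEq P] (h : IsSteinerSystem 3 k block) {w : W}
    {u d : P} (hu : u ∈ block w) (hd : d ∉ block w) {line : P → W}
    (hline : ∀ b ∈ (block w).erase u,
      u ∈ block (line b) ∧ d ∈ block (line b) ∧ b ∈ block (line b)) :
    ((block w).erase u : Set P).PairwiseDisjoint fun b => ((block (line b)).erase u).erase d := by
  intro b hb b' hb' hne
  refine Finset.disjoint_left.2 fun y hy hy' => hd ?_
  simp only [Finset.mem_erase] at hy hy'
  obtain ⟨hub, hdb, hbb⟩ := hline b hb
  obtain ⟨hub', hdb', hbb'⟩ := hline b' hb'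
  have hud : u ≠ d := ne_of_mem_of_not_mem hu hd
  have hlines : line b = line b' :=
    h.eq_of_mem hud hy.2.1.symm hy.1.symm hub hdb hy.2.2 hub' hdb' hy'.2.2
  have hw : line b = w := h.eq_of_mem (Finset.ne_of_mem_erase hb).symm
    (Finset.ne_of_mem_erase hb').symm hne hub hbb (hlines ▸ hbb') hu
    (Finset.mem_of_mem_erase hb) (Finset.mem_of_mem_erase hb')
  exact hw ▸ hdb

/-- For these parameters the system derived at `u` is a projective plane, whose lines meet. -/
lemma exists_block_through [Fintype P] (h : IsSteinerSystem 3 k block)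
    (hcard : Fintype.card P = (k - 1) * (k - 2) + 2) {w : W} {u d z : P} (hu : u ∈ block w)
    (hd : d ∉ block w) (hzu : z ≠ u) (hzd : z ≠ d) :
    ∃ b ∈ block w, b ≠ u ∧ ∃ w', u ∈ block w' ∧ d ∈ block w' ∧ b ∈ block w' ∧ z ∈ block w' := by
  classical
  have hud : u ≠ d := ne_of_mem_of_not_mem hu hd
  have hthrough (b : P) (hb : b ∈ (block w).erase u) :
      ∃ w', u ∈ block w' ∧ d ∈ block w' ∧ b ∈ block w' :=
    h.exists_mem hud (Finset.ne_of_mem_erase hb).symm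
      (ne_of_mem_of_not_mem (Finset.mem_of_mem_erase hb) hd).symm
  have : Nonempty W := ⟨w⟩
  choose! line hline using hthrough
  let rest (b : P) : Finset P := ((block (line b)).erase u).erase d
  have hrest (b) (hb : b ∈ (block w).erase u) : (rest b).card = k - 2 := by
    obtain ⟨hub, hdb, -⟩ := hline b hb
    rw [Finset.card_erase_of_mem (Finset.mem_erase.2 ⟨hud.symm, hdb⟩),
      Finset.card_erase_of_mem hub, h.card_block, Nat.sub_sub]
  have hdisjoint : ((block w).erase u : Set P).PairwiseDisjoint rest :=
    h.pairwiseDisjoint_blocks_through hu hd hline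
  have hcover : ((block w).erase u).biUnion rest = (Finset.univ.erase u).erase d := by
    refine Finset.eq_of_subset_of_card_le (fun y hy => ?_) ?_
    · obtain ⟨b, -, hy⟩ := Finset.mem_biUnion.1 hy
      simp only [rest, Finset.mem_erase] at hy
      simp [hy]
    · rw [Finset.card_biUnion hdisjoint, Finset.sum_congr rfl hrest, Finset.sum_const,
        Finset.card_erase_of_mem hu, h.card_block, smul_eq_mul,
        Finset.card_erase_of_mem (by simp [hud.symm]),
        Finset.card_erase_of_mem (Finset.mem_univ u), Finset.card_univ, hcard]
      omega
  have hz : z ∈ ((block w).erase u).biUnion rest := by simp [hcover, hzu, hzd]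
  obtain ⟨b, hb, hz⟩ := Finset.mem_biUnion.1 hz
  obtain ⟨hub, hdb, hbb⟩ := hline b hb
  simp only [rest, Finset.mem_erase] at hz
  exact ⟨b, Finset.mem_of_mem_erase hb, Finset.ne_of_mem_erase hb, _, hub, hdb, hbb, hz.2.2⟩

end IsSteinerSystem

end SteinerSystems

section SteinerActions

open scoped Pointwise

variable {H P W : Type*} [Group H] [MulAction H P] [MulAction H W] [DecidableEq P]

lemma isSteinerSystem_of_isMultiplyPretransitive [Fintype P] [Fintype W] {t k : ℕ}
    [MulAction.IsMultiplyPretransitive H P t] (block : W →[H] Finset P)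
    (hk : ∀ w, (block w).card = k)
    (hcard : Fintype.card W * k.choose t = (Fintype.card P).choose t) :
    IsSteinerSystem t k block where
  card_block := hk
  existsUnique T hT := by
    have hconst (T' : Finset P) (hT' : T'.card = t) :
        {w | T' ⊆ block w}.ncard = {w | T ⊆ block w}.ncard := by
      obtain ⟨g, rfl⟩ := exists_smul_finset_eq (H := H) hT hT'
      rw [← Set.ncard_image_of_injective {w | T ⊆ block w} (MulAction.injective g)]
      congr 1
      ext w
      rw [Set.image_smul, Set.mem_smul_set_iff_inv_smul_mem]
      change g • T ⊆ block w ↔ T ⊆ block (g⁻¹ • w)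
      rw [map_smul, Finset.smul_finset_subset_iff]
    have hpos : 0 < (Fintype.card P).choose t := Nat.choose_pos (hT ▸ T.card_le_univ)
    have hone : {w | T ⊆ block w}.ncard = 1 := by
      have := card_mul_choose_eq hk hconst
      exact (Nat.mul_left_cancel hpos ((Nat.mul_one _).trans (hcard.symm.trans this))).symm
    obtain ⟨w, hw⟩ := Set.ncard_eq_one.1 hone
    exact ⟨w, hw.ge rfl, fun w' hw' => hw.le hw'⟩

variable {block : W →[H] Finset P}

lemma smul_mem_block_smul_iff {g : H} {w : W} {y : P} : g • y ∈ block (g • w) ↔ y ∈ block w := by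
  rw [map_smul, Finset.smul_mem_smul_finset_iff]

lemma smul_mem_block_iff {g : H} {w : W} (hg : g • w = w) {y : P} :
    g • y ∈ block w ↔ y ∈ block w := by
  nth_rewrite 1 [← hg]
  exact smul_mem_block_smul_iff

lemma card_block_eq_of_isPretransitive [MulAction.IsPretransitive H W] (w w' : W) :
    (block w).card = (block w').card := by
  obtain ⟨g, rfl⟩ := MulAction.exists_smul_eq H w w'
  rw [map_smul, Finset.card_smul_finset]

namespace IsSteinerSystem

variable {k : ℕ}

lemma smul_eq_of_smul_eq {a b c : P} (h : IsSteinerSystem 3 k block) (hab : a ≠ b) (hac : a ≠ c)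
    (hbc : b ≠ c) {g : H} {w : W} (ha : a ∈ block w) (hb : b ∈ block w) (hc : c ∈ block w)
    (hga : g • a = a) (hgb : g • b = b) (hgc : g • c = c) : g • w = w :=
  h.eq_of_mem hab hac hbc (hga ▸ smul_mem_block_smul_iff.2 ha)
    (hgb ▸ smul_mem_block_smul_iff.2 hb) (hgc ▸ smul_mem_block_smul_iff.2 hc) ha hb hc

lemma exists_mem_notMem_of_ne (h : IsSteinerSystem 3 k block) (hk : 3 ≤ k) {w w' : W}
    (hne : w ≠ w') : ∃ y ∈ block w, y ∉ block w' := by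
  by_contra! hsub
  obtain ⟨T, hT, hTcard⟩ := Finset.exists_subset_card_eq (hk.trans_eq (h.card_block w).symm)
  exact hne ((h.existsUnique T hTcard).unique hT fun y hy => hsub y (hT hy))

/-- Two blocks through `d` and `z` that meet `block w` are `g`-invariant; if `g` moved `z`, they
would have the three points `d`, `z` and `g • z` in common. -/
lemma smul_eq_self_of_notMem [Fintype P] (h : IsSteinerSystem 3 k block) (hk : 3 ≤ k)
    (hcard : Fintype.card P = (k - 1) * (k - 2) + 2) {g : H} {w : W}
    (hg : ∀ y ∈ block w, g • y = y) {d : P} (hd : d ∉ block w) (hgd : g • d = d) (z : P) :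
    g • z = z := by
  by_contra hgz
  have hzw : z ∉ block w := fun hz => hgz (hg z hz)
  have hzd : z ≠ d := fun hz => hgz (hz ▸ hgd)
  have hinvariant (u : P) (hu : u ∈ block w) :
      ∃ w', u ∈ block w' ∧ d ∈ block w' ∧ z ∈ block w' ∧ g • z ∈ block w' := by
    obtain ⟨b, hb, hbu, w', huw', hdw', hbw', hzw'⟩ :=
      h.exists_block_through hcard hu hd (ne_of_mem_of_not_mem hu hzw).symm hzd
    have hgw' : g • w' = w' := h.smul_eq_of_smul_eq hbu.symm (ne_of_mem_of_not_mem hu hd)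
      (ne_of_mem_of_not_mem hb hd) huw' hbw' hdw' (hg u hu) (hg b hb) hgd
    exact ⟨w', huw', hdw', hzw', (smul_mem_block_iff hgw').2 hzw'⟩
  obtain ⟨u₁, hu₁⟩ : (block w).Nonempty := Finset.card_pos.1 (by rw [h.card_block]; omega)
  obtain ⟨w₁, -, hd₁, hz₁, hgz₁⟩ := hinvariant u₁ hu₁
  obtain ⟨u₂, hu₂, hu₂w₁⟩ := h.exists_mem_notMem_of_ne hk (w := w) (w' := w₁)
    fun hw => hd (hw ▸ hd₁)
  obtain ⟨w₂, hu₂w₂, hd₂, hz₂, hgz₂⟩ := hinvariant u₂ hu₂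
  have hdgz : d ≠ g • z := fun hdz => hzd (MulAction.injective g (hdz.symm.trans hgd.symm))
  have hw : w₁ = w₂ := h.eq_of_mem hzd.symm hdgz (Ne.symm hgz) hd₁ hz₁ hgz₁ hd₂ hz₂ hgz₂
  exact hu₂w₁ (hw ▸ hu₂w₂)

lemma eq_one_of_mem_fixingSubgroup [Fintype P] [FaithfulSMul H P] (h : IsSteinerSystem 3 k block)
    (hk : 3 ≤ k) (hcard : Fintype.card P = (k - 1) * (k - 2) + 2) {w : W} {g : H}
    (hg : g ∈ fixingSubgroup H (block w : Set P)) {d : P} (hd : d ∉ block w) (hgd : g • d = d) :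
    g = 1 := by
  refine eq_of_smul_eq_smul (α := P) fun z => ?_
  rw [one_smul]
  exact h.smul_eq_self_of_notMem hk hcard ((mem_fixingSubgroup_iff H).1 hg) hd hgd z

lemma card_fixingSubgroup_dvd [Fintype P] [FaithfulSMul H P] (h : IsSteinerSystem 3 k block)
    (hk : 3 ≤ k) (hcard : Fintype.card P = (k - 1) * (k - 2) + 2) (w : W) :
    Nat.card (fixingSubgroup H (block w : Set P)) ∣ Fintype.card P - k := by
  have hcompl : Nat.card (SubMulAction.ofFixingSubgroup H (block w : Set P)) =
      Fintype.card P - k := by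
    rw [← h.card_block w, ← Finset.card_compl, ← Set.ncard_coe_finset, Finset.coe_compl,
      ← Nat.card_coe_set_eq]
    rfl
  rw [← hcompl]
  refine card_dvd_card_of_stabilizer_eq_bot fun d => (Subgroup.eq_bot_iff_forall _).2 fun g hg => ?_
  exact Subtype.ext (h.eq_one_of_mem_fixingSubgroup hk hcard g.2 d.2 (congrArg Subtype.val hg))

/-- An element of the fixing subgroup that commutes with `r` fixes the unique point outside the
block fixed by `r`, so it is trivial: count the fixed points of conjugation by `r`. -/
lemma card_fixingSubgroup_modEq_one [Fintype P] [FaithfulSMul H P] (h : IsSteinerSystem 3 k block)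
    (hk : 3 ≤ k) (hcard : Fintype.card P = (k - 1) * (k - 2) + 2) {p : ℕ} [Fact p.Prime] {r : H}
    (hr : r ^ p = 1) {w : W} (hw : r • w = w) {c : P} (hc : c ∉ block w) (hrc : r • c = c)
    (hunique : ∀ y ∉ block w, r • y = y → y = c) :
    Nat.card (fixingSubgroup H (block w : Set P)) ≡ 1 [MOD p] := by
  have : Finite H := .of_injective (MulAction.toPerm (β := P)) MulAction.toPerm_injective
  set E : Subgroup H := fixingSubgroup H (block w : Set P)
  have hmem (e : H) : e ∈ E ↔ ∀ y ∈ block w, e • y = y := mem_fixingSubgroup_iff H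
  have hconj (e : H) (he : e ∈ E) : ConjAct.toConjAct r • e ∈ E := by
    refine (hmem _).2 fun y hy => ?_
    have hy' : r⁻¹ • y ∈ block w := (smul_mem_block_iff (by rw [inv_smul_eq_iff, hw])).2 hy
    rw [ConjAct.toConjAct_smul, mul_smul, mul_smul, (hmem e).1 he _ hy', smul_inv_smul]
  have hmod := ncard_modEq_ncard_fixed (p := p) (n := 1) (S := (E : Set H)) hconj fun e _ => by
    rw [pow_one, ← map_pow, hr, map_one, one_smul]
  have hfixed : {e ∈ (E : Set H) | ConjAct.toConjAct r • e = e} = {1} := by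
    refine Set.eq_singleton_iff_unique_mem.2 ⟨⟨one_mem E, smul_one _⟩, fun e ⟨he, hre⟩ => ?_⟩
    have hcomm : r * e = e * r := by rwa [ConjAct.toConjAct_smul, mul_inv_eq_iff_eq_mul] at hre
    have hec : e • c = c := by
      refine hunique _ (fun hec => hc ?_) (by rw [← mul_smul, hcomm, mul_smul, hrc])
      rwa [smul_left_cancel e ((hmem e).1 he _ hec)] at hec
    exact h.eq_one_of_mem_fixingSubgroup hk hcard he hc hec
  rwa [hfixed, Set.ncard_singleton, ← Nat.card_coe_set_eq] at hmod

lemma fixingSubgroup_le_stabilizer (h : IsSteinerSystem 3 k block) (hk : 3 ≤ k) (w : W) :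
    fixingSubgroup H (block w : Set P) ≤ MulAction.stabilizer H w := by
  intro g hg
  by_contra hne
  obtain ⟨y, hy, hyw⟩ := h.exists_mem_notMem_of_ne hk (w := w) (w' := g • w) (Ne.symm hne)
  rw [← (mem_fixingSubgroup_iff H).1 hg y hy, smul_mem_block_smul_iff] at hyw
  exact hyw hy

end IsSteinerSystem

/-- The points of `block w` as a set with an action of the stabiliser of `w`. -/
def blockAction (block : W →[H] Finset P) (w : W) : SubMulAction (MulAction.stabilizer H w) P where
  carrier := block w
  smul_mem' g _ hy := (smul_mem_block_iff g.2).2 hy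

lemma card_blockAction (block : W →[H] Finset P) (w : W) :
    Nat.card (blockAction block w) = (block w).card := by
  rw [← Set.ncard_coe_finset, ← Nat.card_coe_set_eq]
  rfl

namespace IsSteinerSystem

lemma isMultiplyPretransitive_blockAction {t : ℕ} [MulAction.IsMultiplyPretransitive H P t]
    (h : IsSteinerSystem t k block) (w : W) :
    MulAction.IsMultiplyPretransitive (MulAction.stabilizer H w) (blockAction block w) t where
  exists_smul_eq x y := by
    let val : blockAction block w ↪ P := .subtype _
    obtain ⟨g, hg⟩ := MulAction.exists_smul_eq H (x.trans val) (y.trans val)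
    have hgi (i : Fin t) : g • (x i : P) = y i := DFunLike.congr_fun hg i
    have hgw : g • w = w := by
      refine (h.existsUnique (Finset.univ.map (y.trans val)) (by simp)).unique ?_ ?_
      · intro z hz
        obtain ⟨i, -, rfl⟩ := Finset.mem_map.1 hz
        change (y i : P) ∈ block (g • w)
        exact hgi i ▸ smul_mem_block_smul_iff.2 (x i).2
      · intro z hz
        obtain ⟨i, -, rfl⟩ := Finset.mem_map.1 hz
        exact (y i).2
    exact ⟨⟨g, hgw⟩, Function.Embedding.ext fun i => Subtype.ext (hgi i)⟩

lemma card_ker_toPermHom_blockAction (h : IsSteinerSystem 3 k block) (hk : 3 ≤ k) (w : W) :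
    Nat.card (MulAction.toPermHom (MulAction.stabilizer H w) (blockAction block w)).ker =
      Nat.card (fixingSubgroup H (block w : Set P)) := by
  have hker : (MulAction.toPermHom (MulAction.stabilizer H w) (blockAction block w)).ker =
      (fixingSubgroup H (block w : Set P)).subgroupOf (MulAction.stabilizer H w) := by
    ext g
    rw [MonoidHom.mem_ker, Subgroup.mem_subgroupOf, mem_fixingSubgroup_iff]
    refine ⟨fun hg y hy => ?_, fun hg => Equiv.ext fun y => Subtype.ext (hg y y.2)⟩
    exact congrArg Subtype.val (DFunLike.congr_fun hg (⟨y, hy⟩ : blockAction block w))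
  rw [hker]
  exact Nat.card_congr
    (Subgroup.subgroupOfEquivOfLe (h.fixingSubgroup_le_stabilizer hk w)).toEquiv

lemma ncard_fixed_block [Fintype P] [FaithfulSMul H P] (h : IsSteinerSystem 3 6 block)
    (hcard : Fintype.card P = 22) {u : H} (hu : u ^ 2 = 1) (hne : u ≠ 1)
    (hfixed : 6 < {y : P | u • y = y}.ncard) {w : W} (hw : u • w = w)
    (hthree : 3 ≤ {y ∈ (block w : Set P) | u • y = y}.ncard) :
    {y ∈ (block w : Set P) | u • y = y}.ncard = 4 := by
  have hblock : (block w : Set P).ncard = 6 := by rw [Set.ncard_coe_finset, h.card_block]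
  have hparity := ncard_modEq_ncard_fixed (p := 2) (n := 1) (s := u) (S := (block w : Set P))
    (fun y hy => (smul_mem_block_iff hw).2 hy) fun y _ => by rw [pow_one, hu, one_smul]
  have hsub : {y ∈ (block w : Set P) | u • y = y} ⊆ block w := Set.sep_subset _ _
  have hlt : {y ∈ (block w : Set P) | u • y = y}.ncard < 6 := by
    rw [← hblock]
    refine Set.ncard_lt_ncard (hsub.ssubset_of_ne fun heq => hne ?_)
    obtain ⟨d, hd, hdw⟩ := Set.exists_mem_notMem_of_ncard_lt_ncard (hblock.trans_lt hfixed)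
    exact h.eq_one_of_mem_fixingSubgroup (by norm_num) hcard
      ((mem_fixingSubgroup_iff H).2 fun y hy => (heq.ge hy).2) hdw hd
  rw [hblock, Nat.ModEq] at hparity
  omega

lemma exists_isSwap_toPermHom [Fintype P] [FaithfulSMul H P] (h : IsSteinerSystem 3 6 block)
    (hcard : Fintype.card P = 22) {u : H} (hu : u ^ 2 = 1) (hne : u ≠ 1)
    (hfixed : 6 < {y : P | u • y = y}.ncard) :
    ∃ w, ∃ g : MulAction.stabilizer H w,
      (MulAction.toPermHom (MulAction.stabilizer H w) (blockAction block w) g).IsSwap := by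
  obtain ⟨a, b, c, ha, hb, hc, hab, hac, hbc⟩ :=
    (Set.two_lt_ncard_iff (Set.toFinite _)).1 (show 2 < {y : P | u • y = y}.ncard by omega)
  obtain ⟨w, haw, hbw, hcw⟩ := h.exists_mem hab hac hbc
  have hw : u • w = w := h.smul_eq_of_smul_eq hab hac hbc haw hbw hcw ha hb hc
  have hfour := h.ncard_fixed_block hcard hu hne hfixed hw <|
    (Set.two_lt_ncard_iff (Set.toFinite _)).2
      ⟨a, b, c, ⟨haw, ha⟩, ⟨hbw, hb⟩, ⟨hcw, hc⟩, hab, hac, hbc⟩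
  have hmoved : ((block w : Set P) \ {y ∈ (block w : Set P) | u • y = y}).ncard = 2 := by
    rw [Set.ncard_sdiff (Set.sep_subset _ _), hfour, Set.ncard_coe_finset, h.card_block]
  refine ⟨w, ⟨u, hw⟩, ?_⟩
  have := Fintype.ofFinite (blockAction block w)
  rw [← Equiv.Perm.card_support_eq_two, ← Set.ncard_coe_finset, ← hmoved,
    ← Set.ncard_image_of_injective _ Subtype.val_injective]
  congr 1
  ext y
  constructor
  · rintro ⟨y, hy, rfl⟩
    refine ⟨y.2, fun hfix => ?_⟩
    exact Equiv.Perm.mem_support.1 hy (Subtype.ext hfix.2)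
  · rintro ⟨hy, hmove⟩
    refine ⟨⟨y, hy⟩, Equiv.Perm.mem_support.2 fun hfix => hmove ⟨hy, ?_⟩, rfl⟩
    exact congrArg Subtype.val hfix

end IsSteinerSystem

lemma range_toPermHom_eq_top {G X : Type*} [Group G] [MulAction G X] [Finite X] [DecidableEq X]
    [MulAction.IsPreprimitive G X] {g : G} (hg : (MulAction.toPermHom G X g).IsSwap) :
    (MulAction.toPermHom G X).range = ⊤ := by
  let toRange : X →ₑ[(MulAction.toPermHom G X).rangeRestrict] X := ⟨id, fun _ _ => rfl⟩
  have : MulAction.IsPreprimitive (MulAction.toPermHom G X).range X :=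
    .of_surjective (f := toRange) Function.surjective_id
  exact Equiv.Perm.subgroup_eq_top_of_isPreprimitive_of_isSwap_mem this _ hg ⟨g, rfl⟩

namespace IsSteinerSystem

lemma card_stabilizer [Finite P] [MulAction.IsMultiplyPretransitive H P 3]
    (h : IsSteinerSystem 3 k block) (hk : 3 ≤ k) {w : W} {g : MulAction.stabilizer H w}
    (hg : (MulAction.toPermHom (MulAction.stabilizer H w) (blockAction block w) g).IsSwap) :
    Nat.card (MulAction.stabilizer H w) =
      Nat.card (fixingSubgroup H (block w : Set P)) * k.factorial := by
  have hcard : Nat.card (blockAction block w) = k :=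
    (card_blockAction block w).trans (h.card_block w)
  have := h.isMultiplyPretransitive_blockAction w
  have htwo : MulAction.IsMultiplyPretransitive
      (MulAction.stabilizer H w) (blockAction block w) 2 :=
    MulAction.isMultiplyPretransitive_of_le (n := 3) (by norm_num) (hk.trans_eq hcard.symm)
  have := MulAction.isPreprimitive_of_is_two_pretransitive htwo
  rw [← Subgroup.card_mul_index
      (MulAction.toPermHom (MulAction.stabilizer H w) (blockAction block w)).ker,
    h.card_ker_toPermHom_blockAction hk, Subgroup.index_ker, range_toPermHom_eq_top hg,
    Subgroup.card_top, Nat.card_perm, hcard]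

lemma card_fixingSubgroup_eq [MulAction.IsPretransitive H W] (w w' : W) :
    Nat.card (fixingSubgroup H (block w : Set P)) =
      Nat.card (fixingSubgroup H (block w' : Set P)) := by
  obtain ⟨g, rfl⟩ := MulAction.exists_smul_eq H w w'
  have hg : g • (block w : Set P) = block (g • w) := by rw [map_smul, Finset.coe_smul_finset]
  exact Nat.card_congr (SubMulAction.fixingSubgroupEquivFixingSubgroup hg).toEquiv

section SteinerSystem3622

variable [Fintype W] [FaithfulSMul H P]

lemma exists_fixingSubgroup_ne_bot [Finite P] (h : IsSteinerSystem 3 6 block)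
    (hW : Fintype.card W = 77) {s : H}
    (hs : HasCycleLengthsOn s (Set.univ : Set P) [1, 1, 4, 8, 8]) :
    ∃ w, fixingSubgroup H (block w : Set P) ≠ ⊥ := by
  have : Fact (Nat.Prime 2) := ⟨Nat.prime_two⟩
  have hs8 : s ^ 2 ^ 3 = 1 := hs.pow_eq_one (by decide)
  have hs4 : s ^ 4 ≠ 1 := fun hone => by
    have hfixed : {y : P | s ^ 4 • y = y}.ncard = 6 := by simpa using hs 4
    have hcard : Nat.card P = 22 := by
      rw [← Set.ncard_univ, hs.ncard_eq]
      rfl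
    simp [hone, hcard] at hfixed
  obtain ⟨w, hw⟩ : ∃ w : W, s • w = w := exists_smul_eq_self (p := 2) hs8 (by rw [hW]; decide)
  refine ⟨w, fun hbot => hs4 ((Subgroup.eq_bot_iff_forall _).1 hbot _ ?_)⟩
  refine (mem_fixingSubgroup_iff H).2 fun y hy => ?_
  exact pow_smul_eq_of_ncard_lt Nat.prime_two (fun z hz => (smul_mem_block_iff hw).2 hz)
    (fun z _ => by rw [hs8, one_smul])
    (by rw [Set.ncard_coe_finset, h.card_block]; norm_num) hy

variable [Fintype P]

lemma exists_card_fixingSubgroup_modEq_one (h : IsSteinerSystem 3 6 block)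
    (hP : Fintype.card P = 22) (hW : Fintype.card W = 77) {r : H}
    (hr : HasCycleLengthsOn r (Set.univ : Set P) [1, 1, 5, 5, 5, 5]) :
    ∃ w, Nat.card (fixingSubgroup H (block w : Set P)) ≡ 1 [MOD 5] := by
  have : Fact (Nat.Prime 5) := ⟨by norm_num⟩
  have hr5 : r ^ 5 = 1 := hr.pow_eq_one (by decide)
  obtain ⟨w, hw⟩ : ∃ w : W, r • w = w :=
    exists_smul_eq_self (p := 5) (n := 1) (by rwa [pow_one]) (by rw [hW]; decide)
  have hcompl : ((block w : Set P)ᶜ).ncard = 16 := by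
    rw [Set.ncard_compl, Set.ncard_coe_finset, h.card_block, Nat.card_eq_fintype_card, hP]
  have hmod := ncard_modEq_ncard_fixed (p := 5) (n := 1) (s := r) (S := (block w : Set P)ᶜ)
    (fun y hy => mt (smul_mem_block_iff hw).1 hy) fun y _ => by rw [pow_one, hr5, one_smul]
  have hle : {y ∈ (block w : Set P)ᶜ | r • y = y}.ncard ≤ 2 := by
    have htotal : {y : P | r • y = y}.ncard = 2 := by simpa using hr 1
    exact htotal ▸ Set.ncard_le_ncard fun y hy => hy.2
  have hone : {y ∈ (block w : Set P)ᶜ | r • y = y}.ncard = 1 := by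
    rw [hcompl, Nat.ModEq] at hmod
    omega
  obtain ⟨c, hc⟩ := Set.ncard_eq_one.1 hone
  have hcmem := hc.ge (Set.mem_singleton c)
  exact ⟨w, h.card_fixingSubgroup_modEq_one (by norm_num) hP hr5 hw hcmem.1 hcmem.2
    fun y hy hry => hc.le ⟨hy, hry⟩⟩

lemma card_fixingSubgroup_eq_sixteen [MulAction.IsPretransitive H W] (h : IsSteinerSystem 3 6 block)
    (hP : Fintype.card P = 22) (hW : Fintype.card W = 77) {r s : H}
    (hr : HasCycleLengthsOn r (Set.univ : Set P) [1, 1, 5, 5, 5, 5])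
    (hs : HasCycleLengthsOn s (Set.univ : Set P) [1, 1, 4, 8, 8]) (w : W) :
    Nat.card (fixingSubgroup H (block w : Set P)) = 16 := by
  have : Finite H := .of_injective (MulAction.toPerm (β := P)) MulAction.toPerm_injective
  obtain ⟨w₁, hmod⟩ := h.exists_card_fixingSubgroup_modEq_one hP hW hr
  obtain ⟨w₂, hne⟩ := h.exists_fixingSubgroup_ne_bot hW hs
  rw [card_fixingSubgroup_eq w₁ w] at hmod
  rw [← Subgroup.one_lt_card_iff_ne_bot, card_fixingSubgroup_eq w₂ w] at hne
  obtain ⟨j, hj, hcard⟩ : ∃ j ≤ 4, Nat.card (fixingSubgroup H (block w : Set P)) = 2 ^ j :=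
    (Nat.dvd_prime_pow Nat.prime_two).1 <| by
      simpa [hP] using h.card_fixingSubgroup_dvd (by norm_num) hP w
  rw [hcard] at hmod hne ⊢
  interval_cases j <;> simp_all [Nat.ModEq]

theorem card_eq [MulAction.IsPretransitive H W] [MulAction.IsMultiplyPretransitive H P 3]
    (h : IsSteinerSystem 3 6 block) (hP : Fintype.card P = 22) (hW : Fintype.card W = 77)
    {r s v : H} (hr : HasCycleLengthsOn r (Set.univ : Set P) [1, 1, 5, 5, 5, 5])
    (hs : HasCycleLengthsOn s (Set.univ : Set P) [1, 1, 4, 8, 8])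
    (hv : HasCycleLengthsOn v (Set.univ : Set P) [1, 1, 2, 3, 3, 6, 6]) :
    Nat.card H = 887040 := by
  have hfixed : {y : P | v ^ 3 • y = y}.ncard = 8 := by simpa using hv 3
  have hne : v ^ 3 ≠ 1 := fun hone => by simp [hone, hP] at hfixed
  obtain ⟨w, g, hg⟩ := h.exists_isSwap_toPermHom hP (u := v ^ 3)
    (by rw [← pow_mul]; exact hv.pow_eq_one (by decide)) hne (by rw [hfixed]; norm_num)
  rw [← Subgroup.card_mul_index (MulAction.stabilizer H w),
    MulAction.index_stabilizer_of_transitive, h.card_stabilizer (by norm_num) hg,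
    h.card_fixingSubgroup_eq_sixteen hP hW hr hs,
    Nat.card_eq_fintype_card, hW]
  rfl

end SteinerSystem3622

end IsSteinerSystem

end SteinerActions

section InvariantGraphs

variable {G Ω : Type*} [Group G] [MulAction G Ω]

/-- `G` acts on the vertices of `Γ` by graph automorphisms. -/
def IsInvariantGraph (G : Type*) {Ω : Type*} [Group G] [MulAction G Ω] (Γ : SimpleGraph Ω) :
    Prop :=
  ∀ (g : G) {y z : Ω}, Γ.Adj (g • y) (g • z) ↔ Γ.Adj y z

lemma hasCycleLengthsOn_subMulAction_iff {N : SubMulAction G Ω} {s : G} {l : List ℕ} :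
    HasCycleLengthsOn s (Set.univ : Set N) l ↔ HasCycleLengthsOn s (N : Set Ω) l := by
  have himage (d : ℕ) : Subtype.val '' {y ∈ (Set.univ : Set N) | s ^ d • y = y} =
      {y ∈ (N : Set Ω) | s ^ d • y = y} := by
    ext y
    constructor
    · rintro ⟨y, hy, rfl⟩
      exact ⟨y.2, congrArg Subtype.val hy.2⟩
    · rintro ⟨hyN, hy⟩
      exact ⟨⟨y, hyN⟩, ⟨Set.mem_univ _, Subtype.ext hy⟩, rfl⟩
  refine forall_congr' fun d => ?_
  rw [← himage, Set.ncard_image_of_injective _ Subtype.val_injective]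

namespace IsInvariantGraph

variable {Γ : SimpleGraph Ω}

lemma adj_smul_iff (hΓ : IsInvariantGraph G Γ) {x : Ω} {g : G} (hg : g • x = x) {y : Ω} :
    Γ.Adj x (g • y) ↔ Γ.Adj x y := by
  rw [← hΓ g (y := x) (z := y), hg]

open scoped Pointwise in
lemma smul_neighborSet (hΓ : IsInvariantGraph G Γ) (g : G) (y : Ω) :
    g • Γ.neighborSet y = Γ.neighborSet (g • y) := by
  ext w
  rw [Set.mem_smul_set_iff_inv_smul_mem, SimpleGraph.mem_neighborSet, SimpleGraph.mem_neighborSet,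
    ← hΓ g, smul_inv_smul]

lemma ncard_neighborSet_eq (hΓ : IsInvariantGraph G Γ) [MulAction.IsPretransitive G Ω] (y z : Ω) :
    (Γ.neighborSet y).ncard = (Γ.neighborSet z).ncard := by
  obtain ⟨g, rfl⟩ := MulAction.exists_smul_eq G y z
  rw [← hΓ.smul_neighborSet, Set.ncard_smul_set]

open scoped Pointwise in
lemma isBlock_insert_neighborSet (hΓ : IsInvariantGraph G Γ) {x : Ω}
    (h : ∀ y ∈ insert x (Γ.neighborSet x),
      insert y (Γ.neighborSet y) = insert x (Γ.neighborSet x)) :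
    MulAction.IsBlock G (insert x (Γ.neighborSet x)) := by
  refine MulAction.isBlock_iff_smul_eq_of_nonempty.2 ?_
  rintro g ⟨_, ⟨z, hz, rfl⟩, hgz⟩
  rw [← h z hz, Set.smul_set_insert, hΓ.smul_neighborSet, h z hz]
  exact h _ hgz

lemma not_isClique_neighborSet (hΓ : IsInvariantGraph G Γ) [Finite Ω]
    [MulAction.IsPretransitive G Ω] {x : Ω}
    (hdvd : ¬(Γ.neighborSet x).ncard + 1 ∣ Nat.card Ω) : ¬Γ.IsClique (Γ.neighborSet x) := by
  intro hclique
  have hcard (y : Ω) : (insert y (Γ.neighborSet y)).ncard = (Γ.neighborSet x).ncard + 1 := by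
    rw [Set.ncard_insert_of_notMem (Γ.notMem_neighborSet_self), hΓ.ncard_neighborSet_eq y x]
  refine hdvd (hcard x ▸ MulAction.IsBlock.ncard_dvd_card (hΓ.isBlock_insert_neighborSet ?_)
    (Set.insert_nonempty _ _))
  rintro y (rfl | hy)
  · rfl
  refine (Set.eq_of_subset_of_ncard_le ?_ (by rw [hcard, hcard])).symm
  rintro z (rfl | hz)
  · exact Or.inr (SimpleGraph.Adj.symm hy)
  · exact (eq_or_ne z y).imp id fun hne => hclique hy hz hne.symm

variable (hΓ : IsInvariantGraph G Γ) (x : Ω)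

/-- The neighbours of `x`, with the action of the stabiliser of `x`. -/
def neighbors : SubMulAction (MulAction.stabilizer G x) Ω where
  carrier := Γ.neighborSet x
  smul_mem' g _ hy := (hΓ.adj_smul_iff g.2).2 hy

/-- The vertices different from `x` and not adjacent to it, with the action of the stabiliser
of `x`. -/
def nonNeighbors : SubMulAction (MulAction.stabilizer G x) Ω where
  carrier := {w | w ≠ x ∧ ¬Γ.Adj x w}
  smul_mem' g _ hw := ⟨fun h => hw.1 (smul_left_cancel g.1 (h.trans g.2.symm)),
    fun h => hw.2 ((hΓ.adj_smul_iff g.2).1 h)⟩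

variable {x}

lemma not_adj_of_mem_neighbors [Finite Ω] [MulAction.IsPretransitive G Ω]
    [MulAction.IsMultiplyPretransitive (MulAction.stabilizer G x) (hΓ.neighbors x) 2]
    (hdvd : ¬(Γ.neighborSet x).ncard + 1 ∣ Nat.card Ω) (y z : hΓ.neighbors x) :
    ¬Γ.Adj (y : Ω) z := by
  refine fun hyz => hΓ.not_isClique_neighborSet hdvd fun y' hy' z' hz' hne => ?_
  obtain ⟨g, hgy, hgz⟩ := MulAction.is_two_pretransitive_iff.1
    ‹MulAction.IsMultiplyPretransitive (MulAction.stabilizer G x) (hΓ.neighbors x) 2›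
    (show y ≠ z from fun h => hyz.ne (congrArg Subtype.val h))
    (show (⟨y', hy'⟩ : hΓ.neighbors x) ≠ ⟨z', hz'⟩ from fun h => hne (congrArg Subtype.val h))
  have hgyz := (hΓ g.1).2 hyz
  rwa [show g.1 • (y : Ω) = y' from congrArg Subtype.val hgy,
    show g.1 • (z : Ω) = z' from congrArg Subtype.val hgz] at hgyz

lemma ncard_fixed_eq [Finite Ω] (s : MulAction.stabilizer G x) :
    {y : Ω | s • y = y}.ncard =
      {y : hΓ.neighbors x | s • y = y}.ncard + {w : hΓ.nonNeighbors x | s • w = w}.ncard + 1 := by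
  rw [← Set.ncard_image_of_injective {y : hΓ.neighbors x | s • y = y} Subtype.val_injective,
    ← Set.ncard_image_of_injective {w : hΓ.nonNeighbors x | s • w = w} Subtype.val_injective,
    ← Set.ncard_union_eq, ← Set.ncard_insert_of_notMem (a := x)]
  · congr 1
    ext y
    constructor
    · intro hy
      by_cases hyx : y = x
      · exact Or.inl hyx
      by_cases hadj : Γ.Adj x y
      · exact Or.inr (Or.inl ⟨⟨y, hadj⟩, Subtype.ext hy, rfl⟩)
      · exact Or.inr (Or.inr ⟨⟨y, hyx, hadj⟩, Subtype.ext hy, rfl⟩)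
    · rintro (rfl | ⟨y, hy, rfl⟩ | ⟨y, hy, rfl⟩)
      exacts [s.2, congrArg Subtype.val hy, congrArg Subtype.val hy]
  · rintro (⟨y, -, hy⟩ | ⟨y, -, hy⟩)
    exacts [SimpleGraph.Adj.ne (G := Γ) y.2 hy.symm, y.2.1 hy]
  · rw [Set.disjoint_left]
    rintro _ ⟨y, -, rfl⟩ ⟨w, -, hw⟩
    exact w.2.2 (hw ▸ y.2)

lemma card_eq_card_neighbors_add [Finite Ω] :
    Nat.card Ω = Nat.card (hΓ.neighbors x) + Nat.card (hΓ.nonNeighbors x) + 1 := by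
  simpa using hΓ.ncard_fixed_eq (1 : MulAction.stabilizer G x)

lemma ncard_fixed_eq_zero_and_zero [Finite Ω] {v : MulAction.stabilizer G x}
    (hfixed : {y : Ω | v • y = y}.ncard = 1) :
    {y : hΓ.neighbors x | v • y = y}.ncard = 0 ∧
      {w : hΓ.nonNeighbors x | v • w = w}.ncard = 0 := by
  rw [hΓ.ncard_fixed_eq] at hfixed
  omega

lemma ncard_fixed_eq_one_and_zero [Finite Ω] (hP : Nat.card (hΓ.neighbors x) = 22)
    {u : MulAction.stabilizer G x} (hu : u ^ 7 = 1) (hfixed : {y : Ω | u • y = y}.ncard = 2) :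
    {y : hΓ.neighbors x | u • y = y}.ncard = 1 ∧
      {w : hΓ.nonNeighbors x | u • w = w}.ncard = 0 := by
  have : Fact (Nat.Prime 7) := ⟨by norm_num⟩
  obtain ⟨m, hm, hmod⟩ := exists_ncard_modEq (p := 7) (P := hΓ.neighbors x) (s := u)
    (a := (default : Fin 0 ↪ _)) (fun y => by rw [hu, one_smul]) (Subsingleton.elim _ _)
    (S := Set.univ) (by simp) fun y _ => Set.mem_univ _
  rw [hΓ.ncard_fixed_eq] at hfixed
  rw [Set.ncard_univ, hP, Nat.ModEq] at hmod
  omega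

variable (x) [Finite Ω] [DecidableEq Ω]

open scoped Pointwise in
/-- The block attached to a vertex `w` at distance at least two from `x`: the common neighbours
of `w` and `x`. -/
noncomputable def block :
    hΓ.nonNeighbors x →[MulAction.stabilizer G x] Finset (hΓ.neighbors x) where
  toFun w := (Set.toFinite {y : hΓ.neighbors x | Γ.Adj (y : Ω) w}).toFinset
  map_smul' g w := by
    ext y
    rw [id_eq, ← Finset.inv_smul_mem_iff, Set.Finite.mem_toFinset, Set.Finite.mem_toFinset]
    change Γ.Adj (y : Ω) (g.1 • (w : Ω)) ↔ Γ.Adj (g.1⁻¹ • (y : Ω)) w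
    rw [← hΓ g.1⁻¹, inv_smul_smul]

variable {x}

lemma mem_block {w : hΓ.nonNeighbors x} {y : hΓ.neighbors x} :
    y ∈ hΓ.block x w ↔ Γ.Adj (y : Ω) w :=
  Set.Finite.mem_toFinset _

lemma ncard_blocks_through [MulAction.IsPretransitive G Ω] (y : hΓ.neighbors x)
    (htriangle : ∀ z : hΓ.neighbors x, ¬Γ.Adj (y : Ω) z) :
    {w | y ∈ hΓ.block x w}.ncard = (Γ.neighborSet x).ncard - 1 := by
  have himage : Subtype.val '' {w | y ∈ hΓ.block x w} = Γ.neighborSet (y : Ω) \ {x} := by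
    ext w
    constructor
    · rintro ⟨w, hw, rfl⟩
      exact ⟨hΓ.mem_block.1 hw, w.2.1⟩
    · rintro ⟨hyw, hwx⟩
      exact ⟨⟨w, hwx, fun hxw => htriangle ⟨w, hxw⟩ hyw⟩, hΓ.mem_block.2 hyw, rfl⟩
  have hx : x ∈ Γ.neighborSet (y : Ω) := SimpleGraph.Adj.symm y.2
  rw [← Set.ncard_image_of_injective _ Subtype.val_injective, himage,
    Set.ncard_sdiff_singleton_of_mem hx, hΓ.ncard_neighborSet_eq _ x]

lemma faithfulSMul_neighbors [FaithfulSMul G Ω] {k : ℕ} (h : IsSteinerSystem 3 k (hΓ.block x))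
    (hk : 3 ≤ k) : FaithfulSMul (MulAction.stabilizer G x) (hΓ.neighbors x) := by
  refine faithfulSMul_iff.2 fun g hg => ?_
  have hw (w : hΓ.nonNeighbors x) : g • w = w := by
    by_contra hne
    obtain ⟨y, hy, hyw⟩ := h.exists_mem_notMem_of_ne hk hne
    rw [← hg y, smul_mem_block_smul_iff] at hy
    exact hyw hy
  refine eq_of_smul_eq_smul (α := Ω) fun y => ?_
  rw [one_smul]
  by_cases hyx : y = x
  · exact hyx ▸ g.2
  by_cases hadj : Γ.Adj x y
  · exact congrArg Subtype.val (hg ⟨y, hadj⟩)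
  · exact congrArg Subtype.val (hw ⟨y, hyx, hadj⟩)

lemma isSteinerSystem_block [MulAction.IsPretransitive G Ω]
    [MulAction.IsPretransitive (MulAction.stabilizer G x) (hΓ.nonNeighbors x)]
    [MulAction.IsMultiplyPretransitive (MulAction.stabilizer G x) (hΓ.neighbors x) 3]
    (hP : Nat.card (hΓ.neighbors x) = 22) (hW : Nat.card (hΓ.nonNeighbors x) = 77)
    (htriangle : ∀ y z : hΓ.neighbors x, ¬Γ.Adj (y : Ω) z) :
    IsSteinerSystem 3 6 (hΓ.block x) := by
  have := Fintype.ofFinite (hΓ.neighbors x)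
  have := Fintype.ofFinite (hΓ.nonNeighbors x)
  have hW' := Nat.card_eq_fintype_card.symm.trans hW
  have hP' := Nat.card_eq_fintype_card.symm.trans hP
  obtain ⟨w₀⟩ : Nonempty (hΓ.nonNeighbors x) := Fintype.card_pos_iff.1 (by rw [hW']; norm_num)
  have hconst (w) : (hΓ.block x w).card = (hΓ.block x w₀).card :=
    card_block_eq_of_isPretransitive w w₀
  have hthrough (T : Finset (hΓ.neighbors x)) (hT : T.card = 1) :
      {w | T ⊆ hΓ.block x w}.ncard = 21 := by
    obtain ⟨y, rfl⟩ := Finset.card_eq_one.1 hT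
    simp_rw [Finset.singleton_subset_iff]
    rw [hΓ.ncard_blocks_through y (htriangle y), ← Nat.card_coe_set_eq]
    exact congrArg (· - 1) hP
  have hcount := card_mul_choose_eq hconst hthrough
  rw [Nat.choose_one_right, Nat.choose_one_right, hW', hP'] at hcount
  have hsix : (hΓ.block x w₀).card = 6 := by omega
  exact isSteinerSystem_of_isMultiplyPretransitive _ (fun w => (hconst w).trans hsix)
    (by rw [hW', hP']; rfl)

end IsInvariantGraph

section HigmanSimsGraph

variable {Γ : SimpleGraph Ω} (hΓ : IsInvariantGraph G Γ) [Finite Ω] {x : Ω}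
  {v u r s z : MulAction.stabilizer G x}

namespace IsInvariantGraph

lemma isPretransitive_nonNeighbors [FaithfulSMul G Ω] (hP : Nat.card (hΓ.neighbors x) = 22)
    (hW : Nat.card (hΓ.nonNeighbors x) = 77)
    (hv : HasCycleLengthsOn v (Set.univ : Set Ω) (1 :: List.replicate 9 11))
    (hu : HasCycleLengthsOn u (Set.univ : Set Ω) (1 :: 1 :: List.replicate 14 7)) :
    MulAction.IsPretransitive (MulAction.stabilizer G x) (hΓ.nonNeighbors x) := by
  have hv11 : v ^ 11 = 1 := hv.pow_eq_one (by decide)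
  have hu7 : u ^ 7 = 1 := hu.pow_eq_one (by decide)
  exact isPretransitive_of_card_eq_77 hW (by simp [hv11])
    (hΓ.ncard_fixed_eq_zero_and_zero hv.ncard_fixed).2 (by simp [hu7])
    (hΓ.ncard_fixed_eq_one_and_zero hP hu7 hu.ncard_fixed).2

lemma isMultiplyPretransitive_two_neighbors [FaithfulSMul G Ω]
    (hv : HasCycleLengthsOn v (Set.univ : Set Ω) (1 :: List.replicate 9 11))
    (hu : HasCycleLengthsOn u (Set.univ : Set Ω) (1 :: 1 :: List.replicate 14 7))
    (hr : HasCycleLengthsOn r (Set.univ : Set (hΓ.neighbors x)) [1, 1, 5, 5, 5, 5]) :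
    MulAction.IsMultiplyPretransitive (MulAction.stabilizer G x) (hΓ.neighbors x) 2 := by
  have hP : Nat.card (hΓ.neighbors x) = 22 := by rw [← Set.ncard_univ, hr.ncard_eq]; rfl
  have hv11 : v ^ 11 = 1 := hv.pow_eq_one (by decide)
  have hu7 : u ^ 7 = 1 := hu.pow_eq_one (by decide)
  have hufix := (hΓ.ncard_fixed_eq_one_and_zero hP hu7 hu.ncard_fixed).1
  have : MulAction.IsPretransitive (MulAction.stabilizer G x) (hΓ.neighbors x) :=
    isPretransitive_of_card_eq_22 hP (by simp [hv11])
      (hΓ.ncard_fixed_eq_zero_and_zero hv.ncard_fixed).1 (by simp [hu7]) hufix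
  exact isMultiplyPretransitive_two_of_card_eq_22 hP (by simp [hu7]) hufix
    (fun y => hr.pow_smul_eq (by decide) (Set.mem_univ y)) hr.ncard_fixed

lemma isMultiplyPretransitive_three_neighbors
    [MulAction.IsMultiplyPretransitive (MulAction.stabilizer G x) (hΓ.neighbors x) 2]
    (hr : HasCycleLengthsOn r (Set.univ : Set (hΓ.neighbors x)) [1, 1, 5, 5, 5, 5])
    (hs : HasCycleLengthsOn s (Set.univ : Set (hΓ.neighbors x)) [1, 1, 4, 8, 8]) :
    MulAction.IsMultiplyPretransitive (MulAction.stabilizer G x) (hΓ.neighbors x) 3 :=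
  isMultiplyPretransitive_three_of_card_eq_22 (by rw [← Set.ncard_univ, hr.ncard_eq]; rfl)
    (fun y => hr.pow_smul_eq (by decide) (Set.mem_univ y)) hr.ncard_fixed
    (fun y => hs.pow_smul_eq (by decide) (Set.mem_univ y)) hs.ncard_fixed (hs.ncard_fixed_pow 2)

end IsInvariantGraph

theorem card_eq_of_isInvariantGraph (hΓ : IsInvariantGraph G Γ) [FaithfulSMul G Ω]
    [MulAction.IsPretransitive G Ω] (hΩ : Nat.card Ω = 100)
    (hv : HasCycleLengthsOn v (Set.univ : Set Ω) (1 :: List.replicate 9 11))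
    (hu : HasCycleLengthsOn u (Set.univ : Set Ω) (1 :: 1 :: List.replicate 14 7))
    (hr : HasCycleLengthsOn r (Γ.neighborSet x) [1, 1, 5, 5, 5, 5])
    (hs : HasCycleLengthsOn s (Γ.neighborSet x) [1, 1, 4, 8, 8])
    (hz : HasCycleLengthsOn z (Γ.neighborSet x) [1, 1, 2, 3, 3, 6, 6]) :
    Nat.card G = 88704000 := by
  classical
  have hrP := (hasCycleLengthsOn_subMulAction_iff (N := hΓ.neighbors x)).2 hr
  have hsP := (hasCycleLengthsOn_subMulAction_iff (N := hΓ.neighbors x)).2 hs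
  have hzP := (hasCycleLengthsOn_subMulAction_iff (N := hΓ.neighbors x)).2 hz
  have hdeg : (Γ.neighborSet x).ncard = 22 := hr.ncard_eq
  have hP : Nat.card (hΓ.neighbors x) = 22 := hdeg
  have hW : Nat.card (hΓ.nonNeighbors x) = 77 := by
    have := hΓ.card_eq_card_neighbors_add (x := x)
    omega
  have := hΓ.isPretransitive_nonNeighbors hP hW hv hu
  have := hΓ.isMultiplyPretransitive_two_neighbors hv hu hrP
  have := hΓ.isMultiplyPretransitive_three_neighbors hrP hsP
  have hsteiner := hΓ.isSteinerSystem_block hP hW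
    (hΓ.not_adj_of_mem_neighbors (by rw [hdeg, hΩ]; decide))
  have := hΓ.faithfulSMul_neighbors hsteiner (by norm_num)
  have := Fintype.ofFinite (hΓ.neighbors x)
  have := Fintype.ofFinite (hΓ.nonNeighbors x)
  have hstabilizer := hsteiner.card_eq (Nat.card_eq_fintype_card.symm.trans hP)
    (Nat.card_eq_fintype_card.symm.trans hW) hrP hsP hzP
  rw [← Subgroup.card_mul_index (MulAction.stabilizer G x),
    MulAction.index_stabilizer_of_transitive, hstabilizer, hΩ]

end HigmanSimsGraph

end InvariantGraphs

section IntegerEvaluation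

lemma map_intEval {R S : Type*} [CommRing R] [CommRing S] (φ : R →+* S) (x : R) (a : ℤ[X]) :
    φ (intEval x a) = intEval (φ x) a := by
  rw [coe_eval₂RingHom, hom_eval₂, Subsingleton.elim (φ.comp (Int.castRingHom R))
    (Int.castRingHom S), coe_eval₂RingHom]

lemma range_intEval {R : Type*} [CommRing R] (x : R) :
    (intEval x).range = Subring.closure {x} := by
  refine le_antisymm ?_ (Subring.closure_le.2 (Set.singleton_subset_iff.2 ⟨X, eval₂_X _ _⟩))
  rintro _ ⟨a, rfl⟩
  let x' : Subring.closure {x} := ⟨x, Subring.subset_closure rfl⟩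
  exact map_intEval (Subring.closure {x}).subtype x' a ▸ (intEval x' a).2

variable {L : Type*} [Field L]

lemma mem_subfieldClosure_singleton_iff {x z : L} :
    z ∈ Subfield.closure {x} ↔ ∃ a b : ℤ[X], intEval x a / intEval x b = z := by
  simp only [Subfield.mem_closure_iff, ← range_intEval, RingHom.mem_range, exists_exists_eq_and]

lemma subfield_ratFunc_eq_top {k : Type*} [Field k] {S : Subfield (RatFunc k)}
    (hC : ∀ r, RatFunc.C r ∈ S) (hX : RatFunc.X ∈ S) : S = ⊤ := by
  have htop := congrArg IntermediateField.toSubfield (RatFunc.adjoin_X (K := k))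
  refine top_le_iff.1 (htop.symm.trans_le (Subfield.closure_le.2 (Set.union_subset ?_
    (Set.singleton_subset_iff.2 hX))))
  rintro _ ⟨r, rfl⟩
  exact hC r

variable [Algebra (RatFunc ℚ) L] {x : L}

lemma adjoin_simple_toSubfield_le
    (ht : algebraMap (RatFunc ℚ) L RatFunc.X ∈ Subfield.closure {x}) :
    (IntermediateField.adjoin (RatFunc ℚ) {x}).toSubfield ≤ Subfield.closure {x} := by
  refine Subfield.closure_le.2 (Set.union_subset ?_ Subfield.subset_closure)
  have htop : (Subfield.closure {x}).comap (algebraMap (RatFunc ℚ) L) = ⊤ :=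
    subfield_ratFunc_eq_top (fun r => by rw [eq_ratCast]; exact SubfieldClass.ratCast_mem _ r) ht
  rintro _ ⟨r, rfl⟩
  exact htop.ge (Subfield.mem_top r)

lemma injective_intEval (ht : algebraMap (RatFunc ℚ) L RatFunc.X ∈ Subfield.closure {x}) :
    Function.Injective (intEval x) := by
  have := charZero_of_injective_algebraMap (algebraMap (RatFunc ℚ) L).injective
  have hX : Transcendental ℚ (RatFunc.X : RatFunc ℚ) := by
    rw [Subsingleton.elim DivisionRing.toRatAlgebra (RatFunc.instAlgebraOfPolynomial ℚ ℚ)]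
    exact transcendental_ratFuncX
  have htrans : Transcendental ℚ x := fun hx => by
    have hle : Subfield.closure {x} ≤ (algebraicClosure ℚ L).toSubfield :=
      Subfield.closure_le.2 (Set.singleton_subset_iff.2 (mem_algebraicClosure_iff.2 hx))
    exact hX
      ((isAlgebraic_algebraMap_iff (algebraMap (RatFunc ℚ) L).injective).1
        (mem_algebraicClosure_iff.1 (hle ht)))
  exact transcendental_iff_injective.1
    (htrans.restrictScalars (RingHom.injective_int (algebraMap ℤ ℚ)))

/-- If `t` is a rational function of `x`, then `ℚ(t)(x) = ℚ(x)` is the fraction field of `ℤ[X]`. -/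
lemma isFractionRing_adjoin_simple
    (ht : algebraMap (RatFunc ℚ) L RatFunc.X ∈ Subfield.closure {x}) :
    letI := (intEval (IntermediateField.AdjoinSimple.gen (RatFunc ℚ) x)).toAlgebra
    IsFractionRing ℤ[X] (IntermediateField.adjoin (RatFunc ℚ) {x}) := by
  let M := IntermediateField.adjoin (RatFunc ℚ) {x}
  let gen : M := IntermediateField.AdjoinSimple.gen (RatFunc ℚ) x
  let : Algebra ℤ[X] M := (intEval gen).toAlgebra
  have heval (a : ℤ[X]) : algebraMap M L (intEval gen a) = intEval x a := map_intEval _ gen a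
  have : FaithfulSMul ℤ[X] M := (faithfulSMul_iff_algebraMap_injective _ _).2 fun a b hab =>
    injective_intEval ht (by rw [← heval, ← heval]; exact congrArg _ hab)
  refine IsFractionRing.of_field _ _ fun z => ?_
  obtain ⟨a, b, hab⟩ := mem_subfieldClosure_singleton_iff.1 (adjoin_simple_toSubfield_le ht z.2)
  refine ⟨a, b, (algebraMap M L).injective ?_⟩
  rw [map_div₀]
  exact hab.symm.trans (congrArg₂ (· / ·) (heval a).symm (heval b).symm)

theorem IsFactorizationCertificate.exists_algEquiv_fixing [FiniteDimensional (RatFunc ℚ) L]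
    [IsGalois (RatFunc ℚ) L] (ht : algebraMap (RatFunc ℚ) L RatFunc.X ∈ Subfield.closure {x})
    {l : ℕ} [Fact l.Prime] {x₀ c : ZMod l} {f : ℤ[X][X]} {a : List (ZMod l)}
    {gs : List (List (ZMod l) × List (ℕ × List (ZMod l)))}
    (hcert : IsFactorizationCertificate l a c gs) (hsplit : (f.map (intEval x)).Splits)
    (hmap : f.map (intEval x₀) = ofCoeffs a) (hc : c ≠ 0)
    (hdeg : f.natDegree ≤ (gs.map fun g => g.1.length).sum) :
    ∃ σ : L ≃ₐ[RatFunc ℚ] L, σ x = x ∧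
      ∀ d, {y : L | (f.map (intEval x)).eval y = 0 ∧ (σ ^ d) y = y}.ncard =
        ((gs.map fun g => g.1.length).filter (· ∣ d)).sum := by
  let M := IntermediateField.adjoin (RatFunc ℚ) {x}
  let gen : M := IntermediateField.AdjoinSimple.gen (RatFunc ℚ) x
  let : Algebra ℤ[X] M := (intEval gen).toAlgebra
  let : Algebra ℤ[X] L := (intEval x).toAlgebra
  have : IsFractionRing ℤ[X] M := isFractionRing_adjoin_simple ht
  have : IsScalarTower ℤ[X] M L :=
    IsScalarTower.of_algebraMap_eq fun a => (map_intEval (algebraMap M L) gen a).symm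
  have hsurj : Function.Surjective (intEval x₀) := fun r =>
    ⟨C (ZMod.cast r : ℤ), by rw [coe_eval₂RingHom, eval₂_C]; exact ZMod.intCast_zmod_cast r⟩
  obtain ⟨σ, hσ⟩ := hcert.exists_ncard_fixed_eq (M := M) (Nat.card_zmod l) hsurj hsplit hmap hc hdeg
  have hpow (d : ℕ) (y : L) : ((σ.restrictScalars (RatFunc ℚ)) ^ d) y = (σ ^ d) y := by
    rw [AlgEquiv.coe_pow, AlgEquiv.coe_pow]
    rfl
  refine ⟨σ.restrictScalars (RatFunc ℚ), σ.commutes gen, fun d => ?_⟩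
  simp only [hpow, eval_map]
  exact hσ d

end IntegerEvaluation

section Fibre

variable {L : Type*} [Field L] [Algebra (RatFunc ℚ) L]

lemma map_F :
    F.map (algebraMap (RatFunc ℚ) L) = (ofCoeffs pCoeffs).map (Int.castRingHom L) -
      C (algebraMap (RatFunc ℚ) L RatFunc.X) * (ofCoeffs qCoeffs).map (Int.castRingHom L) := by
  have hcomp : ((algebraMap (RatFunc ℚ) L).comp RatFunc.C).comp (Int.castRingHom ℚ) =
      Int.castRingHom L := Subsingleton.elim _ _
  simp only [F_eq_map_C, ← map_ofCoeffs_pCoeffs, ← map_ofCoeffs_qCoeffs, Polynomial.map_sub,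
    Polynomial.map_mul, Polynomial.map_map, map_C, ← hcomp, RingHom.comp_assoc]

variable {x : L}

lemma intEval_p_eq (hx : aeval x F = 0) :
    intEval x (ofCoeffs pCoeffs) =
      algebraMap (RatFunc ℚ) L RatFunc.X * intEval x (ofCoeffs qCoeffs) := by
  rw [← eval_map_algebraMap, map_F, eval_sub, eval_mul, eval_C, eval_map, eval_map,
    sub_eq_zero] at hx
  exact hx

lemma intEval_q_ne_zero (hx : aeval x F = 0) : intEval x (ofCoeffs qCoeffs) ≠ 0 := by
  intro hq
  have hp : intEval x (ofCoeffs pCoeffs) = 0 := by rw [intEval_p_eq hx, hq, mul_zero]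
  let φ : ℚ →+* L := (algebraMap (RatFunc ℚ) L).comp RatFunc.C
  have heval (a : ℤ[X]) : (a.map (Int.castRingHom ℚ)).eval₂ φ x = intEval x a := by
    rw [eval₂_map, Subsingleton.elim (φ.comp (Int.castRingHom ℚ)) (Int.castRingHom L),
      coe_eval₂RingHom]
  obtain ⟨a, b, hab⟩ := isCoprime_p_q
  have hone := congrArg (eval₂ φ x) hab
  rw [eval₂_add, eval₂_mul, eval₂_mul, ← map_ofCoeffs_pCoeffs, ← map_ofCoeffs_qCoeffs, heval,
    heval, hp, hq, mul_zero, mul_zero, add_zero, eval₂_one] at hone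
  exact zero_ne_one hone

lemma algebraMap_X_mem_closure (hx : aeval x F = 0) :
    algebraMap (RatFunc ℚ) L RatFunc.X ∈ Subfield.closure {x} :=
  mem_subfieldClosure_singleton_iff.2 ⟨ofCoeffs pCoeffs, ofCoeffs qCoeffs, by
    rw [intEval_p_eq hx, mul_div_cancel_right₀ _ (intEval_q_ne_zero hx)]⟩

lemma map_crossDifference_eq_C_mul_map_F (hx : aeval x F = 0) :
    (crossDifference (ofCoeffs pCoeffs) (ofCoeffs qCoeffs)).map (intEval x) =
      C (intEval x (ofCoeffs qCoeffs)) * F.map (algebraMap (RatFunc ℚ) L) := by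
  have hp := intEval_p_eq hx
  rw [coe_eval₂RingHom] at hp
  rw [map_crossDifference, map_F, hp, coe_eval₂RingHom, C_mul]
  ring

lemma eval_map_crossDifference_eq_zero_iff (hx : aeval x F = 0) {y : L} :
    ((crossDifference (ofCoeffs pCoeffs) (ofCoeffs qCoeffs)).map (intEval x)).eval y = 0 ↔
      aeval y F = 0 := by
  rw [map_crossDifference_eq_C_mul_map_F hx, eval_mul, eval_C, eval_map_algebraMap, mul_eq_zero,
    or_iff_right (intEval_q_ne_zero hx)]

lemma splits_map_crossDifference (hx : aeval x F = 0)
    (hF : (F.map (algebraMap (RatFunc ℚ) L)).Splits) :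
    ((crossDifference (ofCoeffs pCoeffs) (ofCoeffs qCoeffs)).map (intEval x)).Splits := by
  rw [map_crossDifference_eq_C_mul_map_F hx]
  exact (Splits.C _).mul hF

lemma splits_map_adjacencyPolynomial (hx : aeval x F = 0)
    (hF : (F.map (algebraMap (RatFunc ℚ) L)).Splits) :
    (adjacencyPolynomial.map (intEval x)).Splits := by
  refine (splits_map_crossDifference hx hF).of_dvd ?_
    (Polynomial.map_dvd _ adjacencyPolynomial_dvd_crossDifference)
  rw [map_crossDifference_eq_C_mul_map_F hx]
  exact mul_ne_zero (C_ne_zero.2 (intEval_q_ne_zero hx))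
    ((Polynomial.map_ne_zero_iff (algebraMap (RatFunc ℚ) L).injective).2 irreducible_F.ne_zero)

lemma aeval_F_eq_zero_of_adjacencyPolynomial (hx : aeval x F = 0) {y : L}
    (hy : (adjacencyPolynomial.map (intEval x)).eval y = 0) : aeval y F = 0 :=
  (eval_map_crossDifference_eq_zero_iff hx).1 <|
    eval_eq_zero_of_dvd_of_eval_eq_zero
      (Polynomial.map_dvd _ adjacencyPolynomial_dvd_crossDifference) hy

end Fibre

section AdjacencyGraph

lemma coeff_coeff_swap {R : Type*} [CommSemiring R] (f : R[X][X]) (i j : ℕ) :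
    ((Bivariate.swap f).coeff i).coeff j = (f.coeff j).coeff i := by
  induction f using Polynomial.induction_on' with
  | add f g hf hg => simp only [map_add, coeff_add, hf, hg]
  | monomial n a =>
    induction a using Polynomial.induction_on' with
    | add a b ha hb => simp only [map_add, coeff_add, ha, hb]
    | monomial m r =>
      rw [Bivariate.swap_monomial_monomial]
      simp only [coeff_monomial]
      split_ifs <;> simp [*, coeff_monomial]

lemma swap_ofCoeffs₂_eq_self {R : Type*} [CommSemiring R] {A : List (List R)} {n : ℕ}
    (hlength : A.length ≤ n) (hrows : ∀ a ∈ A, a.length ≤ n)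
    (hsymm : ∀ i < n, ∀ j < n, (A.getD j []).getD i 0 = (A.getD i []).getD j 0) :
    Bivariate.swap (ofCoeffs₂ A) = ofCoeffs₂ A := by
  have hrow (j : ℕ) : (A.getD j []).length ≤ n := by
    rcases lt_or_ge j A.length with hj | hj
    · rw [List.getD_eq_getElem _ _ hj]
      exact hrows _ (List.getElem_mem hj)
    · rw [List.getD_eq_default _ _ hj]
      exact Nat.zero_le n
  have hzero (i j : ℕ) (h : n ≤ i ∨ n ≤ j) : (A.getD i []).getD j 0 = 0 := by
    rcases h with hi | hj
    · rw [List.getD_eq_default A _ (hlength.trans hi), List.getD_nil]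
    · exact List.getD_eq_default _ _ ((hrow i).trans hj)
  ext i j
  rw [coeff_coeff_swap, coeff_ofCoeffs₂, coeff_ofCoeffs₂, coeff_ofCoeffs, coeff_ofCoeffs]
  by_cases hij : i < n ∧ j < n
  · exact hsymm i hij.1 j hij.2
  · rw [hzero j i (by omega), hzero i j (by omega)]

lemma swap_adjacencyPolynomial : Bivariate.swap adjacencyPolynomial = adjacencyPolynomial :=
  swap_ofCoeffs₂_eq_self (n := 23) (by decide +kernel) (by decide +kernel) (by decide +kernel)

lemma eval_map_intEval {R : Type*} [CommRing R] (f : ℤ[X][X]) (x y : R) :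
    (f.map (intEval x)).eval y = aevalAeval x y f := by
  have hhom : (evalRingHom y).comp (mapRingHom (intEval x)) = (aevalAeval x y : ℤ[X][X] →ₐ[ℤ] R) :=
    ringHom_ext' (ringHom_ext' (Subsingleton.elim _ _) (by simp)) (by simp)
  exact congrArg (· f) hhom

lemma intEval_eval_X {R : Type*} [CommRing R] (f : ℤ[X][X]) (x : R) :
    intEval x (f.eval X) = (f.map (intEval x)).eval x := by
  rw [eval_map, eval, hom_eval₂, RingHom.comp_id, coe_eval₂RingHom, eval₂_X]

lemma eval_adjacencyPolynomial_comm {R : Type*} [CommRing R] (x y : R) :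
    (adjacencyPolynomial.map (intEval x)).eval y =
      (adjacencyPolynomial.map (intEval y)).eval x := by
  rw [eval_map_intEval, eval_map_intEval, ← Bivariate.aevalAeval_swap, swap_adjacencyPolynomial]

variable {L : Type*} [Field L] [Algebra (RatFunc ℚ) L]

lemma eval_adjacencyPolynomial_self_ne_zero {x : L} (hx : aeval x F = 0) :
    (adjacencyPolynomial.map (intEval x)).eval x ≠ 0 := by
  -- `x` is transcendental, so it suffices that the diagonal restriction is nonzero.
  have hdiag : adjacencyPolynomial.eval X ≠ 0 := fun h => by
    have hone : (adjacencyPolynomial.map (intEval (1 : ℤ))).eval 1 ≠ 0 := by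
      rw [map_adjacencyPolynomial, eval_ofCoeffs]
      decide +kernel
    rw [← intEval_eval_X, h, map_zero] at hone
    exact hone rfl
  rw [← intEval_eval_X]
  exact (map_ne_zero_iff _ (injective_intEval (algebraMap_X_mem_closure hx))).2 hdiag

/-- The graph on the roots of `F` in which `x` and `y` are adjacent when the adjacency polynomial
vanishes at `(x, y)`. For the splitting field this is the Higman-Sims graph. -/
def adjacencyGraph (L : Type*) [Field L] [Algebra (RatFunc ℚ) L] : SimpleGraph (F.rootSet L) where
  Adj x y := (adjacencyPolynomial.map (intEval (x : L))).eval (y : L) = 0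
  symm := ⟨fun x y h => by rwa [eval_adjacencyPolynomial_comm]⟩
  loopless := ⟨fun x => eval_adjacencyPolynomial_self_ne_zero (mem_rootSet.1 x.2).2⟩

end AdjacencyGraph

section GaloisAction

lemma isPretransitive_gal_rootSet {K : Type*} [Field K] {f : K[X]} (hf : Irreducible f) :
    MulAction.IsPretransitive f.Gal (f.rootSet f.SplittingField) := by
  refine ⟨fun y z => ?_⟩
  have hy := minpoly.eq_of_irreducible hf (mem_rootSet.1 y.2).2
  have hz := minpoly.eq_of_irreducible hf (mem_rootSet.1 z.2).2
  obtain ⟨g, hg⟩ := (Normal.minpoly_eq_iff_mem_orbit f.SplittingField).1 (hz.symm.trans hy)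
  exact ⟨g, Subtype.ext hg⟩

instance faithfulSMul_gal_rootSet {K : Type*} [Field K] (f : K[X]) :
    FaithfulSMul f.Gal (f.rootSet f.SplittingField) :=
  ⟨fun h => Gal.ext _ fun y hy => congrArg Subtype.val (h ⟨y, hy⟩)⟩

lemma isInvariantGraph_adjacencyGraph :
    IsInvariantGraph F.Gal (adjacencyGraph F.SplittingField) := by
  intro g y z
  let φ : F.SplittingField →+* F.SplittingField := (g : F.SplittingField ≃ₐ[RatFunc ℚ] _)
  have hcomp : φ.comp (intEval (y : F.SplittingField)) = intEval (φ y) :=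
    RingHom.ext (map_intEval φ _)
  change (adjacencyPolynomial.map (intEval (φ y))).eval (φ z) = 0 ↔
    (adjacencyPolynomial.map (intEval (y : F.SplittingField))).eval (z : F.SplittingField) = 0
  rw [← hcomp, ← Polynomial.map_map, eval_map_apply, map_eq_zero_iff _ φ.injective]

lemma natCard_rootSet_F : Nat.card (F.rootSet F.SplittingField) = 100 := by
  rw [Nat.card_eq_fintype_card,
    card_rootSet_eq_natDegree irreducible_F.separable (SplittingField.splits F), natDegree_F]

theorem IsFactorizationCertificate.exists_hasCycleLengthsOn {l : ℕ} [Fact l.Prime] {x₀ c : ZMod l}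
    {f : ℤ[X][X]} {a : List (ZMod l)} {gs : List (List (ZMod l) × List (ℕ × List (ZMod l)))}
    (hcert : IsFactorizationCertificate l a c gs) (hmap : f.map (intEval x₀) = ofCoeffs a)
    (hc : c ≠ 0) (hdeg : f.natDegree ≤ (gs.map fun g => g.1.length).sum)
    {x : F.rootSet F.SplittingField} (hsplit : (f.map (intEval (x : F.SplittingField))).Splits)
    {S : Set (F.rootSet F.SplittingField)}
    (hS : Subtype.val '' S = {y | (f.map (intEval (x : F.SplittingField))).eval y = 0}) :
    ∃ s : MulAction.stabilizer F.Gal x, HasCycleLengthsOn s S (gs.map fun g => g.1.length) := by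
  have : IsGalois (RatFunc ℚ) F.SplittingField :=
    IsGalois.of_separable_splitting_field irreducible_F.separable
  obtain ⟨σ, hσx, hσ⟩ := hcert.exists_algEquiv_fixing
    (algebraMap_X_mem_closure (mem_rootSet.1 x.2).2) hsplit hmap hc hdeg
  let s : MulAction.stabilizer F.Gal x := ⟨σ, Subtype.ext hσx⟩
  refine ⟨s, fun d => ?_⟩
  have himage : Subtype.val '' {y ∈ S | s ^ d • y = y} =
      {y | (f.map (intEval (x : F.SplittingField))).eval y = 0 ∧ (σ ^ d) y = y} := by
    ext y
    rw [Set.mem_ofPred_eq, ← Set.mem_ofPred_eq (p := fun y => eval y _ = 0), ← hS]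
    constructor
    · rintro ⟨z, ⟨hz, hfix⟩, rfl⟩
      exact ⟨⟨z, hz, rfl⟩, congrArg Subtype.val hfix⟩
    · rintro ⟨⟨z, hz, rfl⟩, hfix⟩
      exact ⟨z, ⟨hz, Subtype.ext hfix⟩, rfl⟩
  rw [← hσ d, ← himage, Set.ncard_image_of_injective _ Subtype.val_injective]

variable {x : F.rootSet F.SplittingField}

lemma image_val_univ_eq_setOf_crossDifference :
    Subtype.val '' (Set.univ : Set (F.rootSet F.SplittingField)) =
      {y | ((crossDifference (ofCoeffs pCoeffs) (ofCoeffs qCoeffs)).map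
        (intEval (x : F.SplittingField))).eval y = 0} := by
  ext y
  rw [Set.image_univ, Subtype.range_coe, Set.mem_ofPred_eq,
    eval_map_crossDifference_eq_zero_iff (mem_rootSet.1 x.2).2,
    mem_rootSet_of_ne irreducible_F.ne_zero]

lemma image_val_neighborSet_eq_setOf_adjacencyPolynomial :
    Subtype.val '' (adjacencyGraph F.SplittingField).neighborSet x =
      {y | (adjacencyPolynomial.map (intEval (x : F.SplittingField))).eval y = 0} := by
  ext y
  refine ⟨?_, fun hy => ⟨⟨y, ?_⟩, hy, rfl⟩⟩
  · rintro ⟨z, hz, rfl⟩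
    exact hz
  · exact (mem_rootSet_of_ne irreducible_F.ne_zero).2
      (aeval_F_eq_zero_of_adjacencyPolynomial (mem_rootSet.1 x.2).2 hy)

variable {l : ℕ} [Fact l.Prime] {x₀ c : ZMod l}
  {gs : List (List (ZMod l) × List (ℕ × List (ZMod l)))}

lemma exists_hasCycleLengthsOn_univ (hcert : IsFactorizationCertificate l (crossCoeffsAt x₀) c gs)
    (hc : c ≠ 0) (hdeg : 100 ≤ (gs.map fun g => g.1.length).sum) :
    ∃ s : MulAction.stabilizer F.Gal x,
      HasCycleLengthsOn s (Set.univ : Set (F.rootSet F.SplittingField))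
        (gs.map fun g => g.1.length) :=
  hcert.exists_hasCycleLengthsOn (map_crossDifference_ofCoeffs x₀) hc
    ((natDegree_crossDifference_le (natDegree_ofCoeffs_le_of_length_le (by decide +kernel))
      (natDegree_ofCoeffs_le_of_length_le (by decide +kernel))).trans hdeg)
    (splits_map_crossDifference (mem_rootSet.1 x.2).2 (SplittingField.splits F))
    image_val_univ_eq_setOf_crossDifference

lemma exists_hasCycleLengthsOn_neighborSet
    (hcert : IsFactorizationCertificate l (adjacencyCoeffsAt x₀) c gs)
    (hc : c ≠ 0) (hdeg : 22 ≤ (gs.map fun g => g.1.length).sum) :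
    ∃ s : MulAction.stabilizer F.Gal x,
      HasCycleLengthsOn s ((adjacencyGraph F.SplittingField).neighborSet x)
        (gs.map fun g => g.1.length) :=
  hcert.exists_hasCycleLengthsOn (map_adjacencyPolynomial x₀) hc
    ((natDegree_ofCoeffs_le_of_length_le (by decide +kernel)).trans hdeg)
    (splits_map_adjacencyPolynomial (mem_rootSet.1 x.2).2 (SplittingField.splits F))
    image_val_neighborSet_eq_setOf_adjacencyPolynomial

instance fact_prime_eleven : Fact (Nat.Prime 11) := ⟨by norm_num⟩

instance fact_prime_thirteen : Fact (Nat.Prime 13) := ⟨by norm_num⟩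

instance fact_prime_thirty_seven : Fact (Nat.Prime 37) := ⟨by norm_num⟩

instance fact_prime_forty_three : Fact (Nat.Prime 43) := ⟨by norm_num⟩

theorem natCard_gal_F : Nat.card F.Gal = 88704000 := by
  have := isPretransitive_gal_rootSet irreducible_F
  obtain ⟨x⟩ : Nonempty (F.rootSet F.SplittingField) :=
    (Nat.card_pos_iff.1 (by rw [natCard_rootSet_F]; norm_num)).1
  obtain ⟨v, hv⟩ := exists_hasCycleLengthsOn_univ (x := x)
    isFactorizationCertificate_orderEleven (by decide) (by decide +kernel)
  obtain ⟨u, hu⟩ := exists_hasCycleLengthsOn_univ (x := x)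
    isFactorizationCertificate_orderSeven (by decide) (by decide +kernel)
  obtain ⟨r, hr⟩ := exists_hasCycleLengthsOn_neighborSet (x := x)
    isFactorizationCertificate_orderFive (by decide) (by decide +kernel)
  obtain ⟨s, hs⟩ := exists_hasCycleLengthsOn_neighborSet (x := x)
    isFactorizationCertificate_orderEight (by decide) (by decide +kernel)
  obtain ⟨z, hz⟩ := exists_hasCycleLengthsOn_neighborSet (x := x)
    isFactorizationCertificate_orderSix (by decide) (by decide +kernel)
  exact card_eq_of_isInvariantGraph isInvariantGraph_adjacencyGraph natCard_rootSet_F hv hu hr hs hz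

end GaloisAction

end BelyiHS

theorem belyi_deg100_stmt18 :
    F.natDegree = 100 ∧ Irreducible F ∧ Nat.card F.Gal = 88704000 :=
  ⟨BelyiHS.natDegree_F, BelyiHS.irreducible_F, BelyiHS.natCard_gal_F⟩
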